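/- Let δ ≥ 1 and a ≥ 1 be integers with gcd(a, δ) = 1. Then there exists x₀ depending only on δ such that for all real x ≥ x₀, x²/(2 φ(δ) log x) ≤ Σ_{p prime, p ≡ a (mod δ), p < x} p ≤ x²/(φ(δ) log x), where φ is Euler's totient function. -/

import Mathlib

/-- The sum of the primes `p < x` with `p ≡ a (mod δ)`. -/
noncomputable def primeSumBelowMod (x : ℝ) (a δ : ℕ) : ℝ :=
  ∑ p ∈ (Finset.range ⌈x⌉₊).filter (fun p => Nat.Prime p ∧ p % δ = a % δ), (p : ℝ)

/-!
Near the line `re s = 1`, Phragmén–Lindelöf interpolation gives `L(s, χ) = O(|im s| ^ ε)`, and the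
`3-4-1` inequality turns this into a lower bound `|L(s, χ)| ≥ c |im s| ^ (-ε)` that persists in a
region `re s ≥ 1 - κ |im s| ^ (-ε)`. Hence the Dirichlet series of `Λ` on a residue class, minus its
pole at `s = 1`, grows slower than every positive power of `|im s|` there and, by Cauchy's
estimates, so do all its derivatives on `1 ≤ re s ≤ 3 / 2`.

Multiplying a function by `log x` differentiates its Mellin transform, so Mellin inversion on lines
`re s = σ`, with `σ` decreasing to `1`, shows that the Riesz mean `∑ n < x, Λ(n) (1 - n / x)` over
the class equals its main term up to `O(x / (log x) ^ k)` for every `k`. Differencing makes the same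
true of `∑ n < x, Λ(n)`, and the two together yield
`∑ n < x, n Λ(n) = x ^ 2 / (2 φ(δ)) + O(x ^ 2 / (log x) ^ k)`.

After discarding prime powers, the weight `log p` has to be removed. The upper bound has a factor
`2` to spare. The lower bound has the exact leading constant; it holds because `log x` exceeds
`log p` by at least `log 2` for every prime `p < x / 2`, a gain of order `x ^ 2 / (log x) ^ 2` that
beats the error term. There are finitely many residue classes, so `x₀` can be chosen uniformly.
-/

namespace PrimesInProgression

open Complex Filter Topology MeasureTheory Set
open Complex.HadamardThreeLines
open ArithmeticFunction.vonMangoldt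
open DirichletCharacter (LFunction LFunctionTrivChar LFunctionTrivChar₁)

lemma one_add_abs_rpow_mul_exp_le {m : ℝ} (hm : 0 ≤ m) (t T : ℝ) :
    (1 + |t|) ^ m * Real.exp (-(t - T) ^ 2) ≤ Real.exp (m ^ 2 / 4) * (1 + |T|) ^ m := by
  have htri : 1 + |t| ≤ (1 + |T|) * Real.exp |t - T| := by
    have h₁ := abs_sub_abs_le_abs_sub t T
    have h₂ := Real.add_one_le_exp |t - T|
    nlinarith [abs_nonneg T, abs_nonneg (t - T)]
  calc (1 + |t|) ^ m * Real.exp (-(t - T) ^ 2)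
      ≤ ((1 + |T|) * Real.exp |t - T|) ^ m * Real.exp (-(t - T) ^ 2) := by gcongr
    _ = Real.exp (|t - T| * m - (t - T) ^ 2) * (1 + |T|) ^ m := by
        rw [Real.mul_rpow (by positivity) (by positivity), ← Real.exp_mul, mul_assoc,
          ← Real.exp_add, mul_comm, ← sub_eq_add_neg]
    _ ≤ Real.exp (m ^ 2 / 4) * (1 + |T|) ^ m := by
        gcongr
        nlinarith [sq_nonneg (|t - T| - m / 2), sq_abs (t - T)]

lemma norm_cexp_sub_mul_I_sq (z : ℂ) (T : ℝ) :
    ‖cexp ((z - T * I) ^ 2)‖ = Real.exp (z.re ^ 2) * Real.exp (-(z.im - T) ^ 2) := by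
  rw [norm_exp, ← Real.exp_add]
  simp [pow_two]
  ring_nf

-- The Gaussian twist `exp ((z - iT) ^ 2)` turns polynomial growth into boundedness, and costs
-- only a constant on the line of height `T`.
lemma exists_norm_le_one_add_abs_im_rpow_of_mem_verticalClosedStrip {F : ℂ → ℂ} {l u A m n : ℝ}
    (hul : l < u) (hm : 0 ≤ m) (hn : 0 ≤ n) (hd : DiffContOnCl ℂ F (verticalStrip l u))
    (hF : ∀ z ∈ verticalClosedStrip l u, ‖F z‖ ≤ A * (1 + |z.im|) ^ m)
    (hFu : ∀ z, z.re = u → ‖F z‖ ≤ A * (1 + |z.im|) ^ n) :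
    ∃ C, 0 < C ∧ ∀ z ∈ verticalClosedStrip l u,
      ‖F z‖ ≤ C * (1 + |z.im|) ^ (m + (n - m) * ((z.re - l) / (u - l))) := by
  set K : ℝ := (A + 1) * Real.exp (l ^ 2 + u ^ 2) * Real.exp (m ^ 2 / 4 + n ^ 2 / 4)
  have hA : 0 ≤ A := nonneg_of_mul_nonneg_left ((norm_nonneg _).trans (hFu u rfl)) (by positivity)
  have hK : 0 < K := by positivity
  have twist {e : ℝ} (he : 0 ≤ e) (heK : e ^ 2 ≤ m ^ 2 + n ^ 2) {z : ℂ} (T : ℝ)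
      (hz : z ∈ verticalClosedStrip l u) (hFz : ‖F z‖ ≤ A * (1 + |z.im|) ^ e) :
      ‖F z * cexp ((z - T * I) ^ 2)‖ ≤ K * (1 + |T|) ^ e := by
    have hre : z.re ^ 2 ≤ l ^ 2 + u ^ 2 := by
      nlinarith [mul_nonneg (sub_nonneg.2 hz.1) (sub_nonneg.2 hz.2), sq_nonneg (l - u),
        sq_nonneg (z.re - l - u), sq_nonneg l, sq_nonneg u]
    calc ‖F z * cexp ((z - T * I) ^ 2)‖
        ≤ A * (1 + |z.im|) ^ e * (Real.exp (l ^ 2 + u ^ 2) * Real.exp (-(z.im - T) ^ 2)) := by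
          rw [norm_mul, norm_cexp_sub_mul_I_sq]
          gcongr
      _ = A * Real.exp (l ^ 2 + u ^ 2) * ((1 + |z.im|) ^ e * Real.exp (-(z.im - T) ^ 2)) := by ring
      _ ≤ (A + 1) * Real.exp (l ^ 2 + u ^ 2) * (Real.exp (m ^ 2 / 4 + n ^ 2 / 4) * (1 + |T|) ^ e) :=
          mul_le_mul (by gcongr; linarith) ((one_add_abs_rpow_mul_exp_le he _ _).trans
            (by gcongr; linarith)) (by positivity) (by positivity)
      _ = K * (1 + |T|) ^ e := by ring
  refine ⟨K, hK, fun z hz ↦ ?_⟩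
  set T := z.im
  set θ := (z.re - l) / (u - l)
  have hinterp := norm_le_interp_of_mem_verticalClosedStrip' hul hz
    (f := fun w ↦ F w * cexp ((w - T * I) ^ 2)) (a := K * (1 + |T|) ^ m) (b := K * (1 + |T|) ^ n)
    (hd.smul (Differentiable.diffContOnCl (by fun_prop)))
    ⟨_, forall_mem_image.2 fun w hw ↦ twist hm (by nlinarith) T hw (hF w hw)⟩
    (fun w (hw : w.re = l) ↦ twist hm (by nlinarith) T ⟨hw.ge, hw.trans_le hul.le⟩
      (hF w ⟨hw.ge, hw.trans_le hul.le⟩))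
    (fun w (hw : w.re = u) ↦ twist hn (by nlinarith) T ⟨hul.le.trans hw.ge, hw.le⟩ (hFu w hw))
  calc ‖F z‖ ≤ ‖F z * cexp ((z - T * I) ^ 2)‖ := by
        rw [norm_mul, norm_cexp_sub_mul_I_sq, sub_self]
        refine le_mul_of_one_le_right (norm_nonneg _) ?_
        simpa using sq_nonneg z.re
    _ ≤ (K * (1 + |T|) ^ m) ^ (1 - θ) * (K * (1 + |T|) ^ n) ^ θ := hinterp
    _ = K * (1 + |T|) ^ (m + (n - m) * θ) := by
        have hT : 0 < 1 + |T| := by positivity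
        rw [Real.mul_rpow hK.le (by positivity), Real.mul_rpow hK.le (by positivity),
          ← Real.rpow_mul hT.le, ← Real.rpow_mul hT.le, mul_mul_mul_comm, ← Real.rpow_add hK,
          ← Real.rpow_add hT, sub_add_cancel, Real.rpow_one]
        ring_nf

/-! ### Dirichlet `L`-functions near the line `re s = 1` -/

/-- The error in approximating the summatory function `∑ n ≤ t, f n` by `m * t`, cut off to `0` for
`t ≤ 1` so that its Mellin transform is an integral over `(1, ∞)`. -/
noncomputable def sumError (f : ℕ → ℂ) (m : ℂ) (t : ℝ) : ℂ :=
  (Ioi 1).indicator (fun t : ℝ ↦ ∑ k ∈ Finset.Icc 1 ⌊t⌋₊, f k - m * t) t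

lemma measurable_sumError (f : ℕ → ℂ) (m : ℂ) : Measurable (sumError f m) := by
  have hsum : Measurable fun n : ℕ ↦ ∑ k ∈ Finset.Icc 1 n, f k := measurable_from_nat
  exact ((hsum.comp Nat.measurable_floor).sub (by fun_prop)).indicator measurableSet_Ioi

lemma norm_sumError_le {f : ℕ → ℂ} {m : ℂ} {B : ℝ}
    (hB : ∀ n : ℕ, ‖∑ k ∈ Finset.Icc 1 n, f k - m * n‖ ≤ B) (t : ℝ) :
    ‖sumError f m t‖ ≤ B + ‖m‖ := by
  have hB₀ : 0 ≤ B := (norm_nonneg _).trans (hB 0)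
  by_cases ht : t ∈ Ioi 1
  · rw [sumError, indicator_of_mem ht]
    have hfloor : ‖m * ((t - ⌊t⌋₊ : ℝ) : ℂ)‖ ≤ ‖m‖ := by
      rw [norm_mul, norm_real, Real.norm_eq_abs,
        abs_of_nonneg (sub_nonneg.2 (Nat.floor_le (zero_lt_one.trans ht).le))]
      exact mul_le_of_le_one_right (norm_nonneg _) (by linarith [Nat.lt_floor_add_one t])
    calc ‖∑ k ∈ Finset.Icc 1 ⌊t⌋₊, f k - m * t‖
        = ‖(∑ k ∈ Finset.Icc 1 ⌊t⌋₊, f k - m * ⌊t⌋₊) - m * ((t - ⌊t⌋₊ : ℝ) : ℂ)‖ := by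
          congr 1; push_cast; ring
      _ ≤ B + ‖m‖ := (norm_sub_le _ _).trans (add_le_add (hB _) hfloor)
  · rw [sumError, indicator_of_notMem ht, norm_zero]
    positivity

lemma mellin_sumError_neg (f : ℕ → ℂ) (m : ℂ) (s : ℂ) :
    mellin (sumError f m) (-s) =
      ∫ t in Ioi (1 : ℝ), (∑ k ∈ Finset.Icc 1 ⌊t⌋₊, f k - m * t) * (t : ℂ) ^ (-(s + 1)) := by
  have hind (t : ℝ) : (t : ℂ) ^ (-s - 1) • sumError f m t = (Ioi (1 : ℝ)).indicator
      (fun t : ℝ ↦ (∑ k ∈ Finset.Icc 1 ⌊t⌋₊, f k - m * t) * (t : ℂ) ^ (-(s + 1))) t := by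
    rw [sumError, smul_eq_mul, mul_comm, neg_add', indicator_mul_left]
  simp_rw [mellin, hind]
  rw [setIntegral_indicator measurableSet_Ioi,
    inter_eq_self_of_subset_right (Ioi_subset_Ioi zero_le_one)]

section

variable {f : ℕ → ℂ} {m : ℂ} {B : ℝ} {s : ℂ}

lemma integrableOn_sumError (hB : ∀ n : ℕ, ‖∑ k ∈ Finset.Icc 1 n, f k - m * n‖ ≤ B)
    (hs : 0 < s.re) :
    IntegrableOn (fun t : ℝ ↦ sumError f m t * (t : ℂ) ^ (-(s + 1))) (Ioi 1) := by
  refine Integrable.bdd_mul (integrableOn_Ioi_cpow_of_lt (by simpa) one_pos)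
    (measurable_sumError f m).aestronglyMeasurable (c := B + ‖m‖) ?_
  exact ae_of_all _ (norm_sumError_le hB)

lemma differentiableAt_mellin_sumError
    (hB : ∀ n : ℕ, ‖∑ k ∈ Finset.Icc 1 n, f k - m * n‖ ≤ B) (hs : s.re < 0) :
    DifferentiableAt ℂ (mellin (sumError f m)) s := by
  refine mellin_differentiableAt_of_isBigO_rpow (a := 0) (b := s.re - 1) ?_ ?_ hs ?_ (by linarith)
  · refine LocallyIntegrable.locallyIntegrableOn ?_ _
    exact (locallyIntegrable_const (B + ‖m‖)).mono (measurable_sumError f m).aestronglyMeasurable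
      (ae_of_all _ fun t ↦ (norm_sumError_le hB t).trans (le_abs_self _))
  · exact .of_bound (B + ‖m‖) (.of_forall fun t ↦ by simpa using norm_sumError_le hB t)
  · have hzero : ∀ᶠ t : ℝ in 𝓝[>] 0, sumError f m t = 0 := by
      filter_upwards [nhdsWithin_le_nhds (Iio_mem_nhds one_pos)] with t (ht : t < 1)
      exact indicator_of_notMem (notMem_Ioi.2 ht.le) _
    exact (Asymptotics.isBigO_zero _ _).congr' (hzero.mono fun _ ↦ Eq.symm) .rfl

lemma norm_mellin_sumError_neg_le
    (hB : ∀ n : ℕ, ‖∑ k ∈ Finset.Icc 1 n, f k - m * n‖ ≤ B) (hs : 0 < s.re) :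
    ‖mellin (sumError f m) (-s)‖ ≤ (B + ‖m‖) / s.re := by
  have hint : ∫ t in Ioi (1 : ℝ), (B + ‖m‖) * t ^ (-(s.re + 1)) = (B + ‖m‖) / s.re := by
    rw [integral_const_mul, integral_Ioi_rpow_of_lt (by linarith) one_pos, Real.one_rpow,
      neg_add_rev, neg_add_cancel_comm, neg_div_neg_eq, mul_one_div]
  rw [mellin_sumError_neg, ← hint]
  refine norm_integral_le_of_norm_le
    ((integrableOn_Ioi_rpow_of_lt (by linarith) one_pos).const_mul _) ?_
  refine (ae_restrict_iff' measurableSet_Ioi).2 (ae_of_all _ fun t (ht : 1 < t) ↦ ?_)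
  rw [norm_mul, norm_cpow_eq_rpow_re_of_pos (by linarith), neg_re, add_re, one_re]
  gcongr
  simpa only [sumError, indicator_of_mem (show t ∈ Ioi 1 from ht)] using norm_sumError_le hB t

lemma sub_one_mul_LSeries_eq (hB : ∀ n : ℕ, ‖∑ k ∈ Finset.Icc 1 n, f k - m * n‖ ≤ B)
    (hf : LSeriesSummable f s) (hs : 1 < s.re) :
    (s - 1) * LSeries f s = m * s + s * (s - 1) * mellin (sumError f m) (-s) := by
  have hs₀ : s ≠ 0 := ne_zero_of_re_pos (by linarith)
  have hs₁ : s - 1 ≠ 0 := sub_ne_zero.2 fun h ↦ by simp [h] at hs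
  have hO : (fun n ↦ ∑ k ∈ Finset.Icc 1 n, f k) =O[atTop] fun n ↦ (n : ℝ) ^ (1 : ℝ) := by
    have herr : (fun n : ℕ ↦ ∑ k ∈ Finset.Icc 1 n, f k - m * n) =O[atTop] fun n ↦ (n : ℝ) := by
      refine .of_bound B ?_
      filter_upwards [eventually_ge_atTop 1] with n hn
      have hn₁ : (1 : ℝ) ≤ n := by exact_mod_cast hn
      exact (hB n).trans (by simpa using le_mul_of_one_le_right ((norm_nonneg _).trans (hB n)) hn₁)
    have hmain : (fun n : ℕ ↦ m * n) =O[atTop] fun n ↦ (n : ℝ) :=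
      .of_bound ‖m‖ (.of_forall fun n ↦ by simp)
    simpa using herr.add hmain
  have hsplit : ∫ t in Ioi (1 : ℝ), (∑ k ∈ Finset.Icc 1 ⌊t⌋₊, f k) * (t : ℂ) ^ (-(s + 1)) =
      mellin (sumError f m) (-s) + m * ∫ t in Ioi (1 : ℝ), (t : ℂ) ^ (-s) := by
    rw [mellin_sumError_neg, ← integral_const_mul, ← integral_add]
    · refine setIntegral_congr_fun measurableSet_Ioi fun t (ht : 1 < t) ↦ ?_
      have ht₀ : (t : ℂ) ≠ 0 := by exact_mod_cast (zero_lt_one.trans ht).ne'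
      have hpow : (t : ℂ) ^ (-s) = t * (t : ℂ) ^ (-(s + 1)) := by
        rw [neg_add', cpow_sub _ _ ht₀, cpow_one, mul_div_cancel₀ _ ht₀]
      simp only [hpow]
      ring
    · refine (integrableOn_sumError hB (by linarith)).congr_fun (fun t ht ↦ ?_) measurableSet_Ioi
      simp only [sumError, indicator_of_mem ht]
    · exact (integrableOn_Ioi_cpow_of_lt (by simpa) one_pos).const_mul _
  rw [LSeries_eq_mul_integral f zero_le_one hs hf hO, hsplit,
    integral_Ioi_cpow_of_lt (by simpa) one_pos, ofReal_one, one_cpow,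
    show -s + 1 = -(s - 1) by ring, neg_div_neg_eq]
  field_simp
  ring

end

section

variable {q : ℕ} [NeZero q] (χ : DirichletCharacter ℂ q)

lemma exists_norm_sum_sub_mul_le :
    ∃ (m : ℂ) (B : ℝ), ∀ n : ℕ, ‖∑ k ∈ Finset.Icc 1 n, χ k - m * n‖ ≤ B := by
  set S : ℕ → ℂ := fun n ↦ ∑ k ∈ Finset.Icc 1 n, χ k
  have S_succ (n : ℕ) : S (n + 1) = S n + χ (n + 1 : ℕ) := Finset.sum_Icc_succ_top (by simp) _
  have S_add (n : ℕ) : S (n + q) = S n + S q := by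
    induction n with
    | zero => simp [S]
    | succ n ih => rw [add_right_comm, S_succ, S_succ, ih]; simp [add_right_comm]
  have hq : (q : ℂ) ≠ 0 := NeZero.ne _
  have hper : Function.Periodic (fun n : ℕ ↦ S n - S q / q * n) q := fun n ↦ by
    simp only [S_add]
    push_cast
    field_simp
    ring
  refine ⟨S q / q, ∑ i ∈ Finset.range q, ‖S i - S q / q * i‖, fun n ↦ ?_⟩
  rw [← hper.map_mod_nat n]
  exact Finset.single_le_sum (f := fun i : ℕ ↦ ‖S i - S q / q * i‖) (fun _ _ ↦ norm_nonneg _)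
    (Finset.mem_range.2 (Nat.mod_lt _ (NeZero.pos q)))

lemma exists_differentiable_eq_sub_one_mul_LFunction :
    ∃ P : ℂ → ℂ, Differentiable ℂ P ∧ ∀ s ≠ 1, P s = (s - 1) * LFunction χ s := by
  by_cases hχ : χ = 1
  · subst hχ
    exact ⟨LFunctionTrivChar₁ q, DirichletCharacter.differentiable_LFunctionTrivChar₁ q,
      fun s hs ↦ Function.update_of_ne hs _ _⟩
  · exact ⟨fun s ↦ (s - 1) * LFunction χ s, (differentiable_id.sub_const 1).mul
      (DirichletCharacter.differentiable_LFunction hχ), fun _ _ ↦ rfl⟩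

variable {χ} in
lemma sub_one_mul_LFunction_eq {m : ℂ} {B : ℝ}
    (hB : ∀ n : ℕ, ‖∑ k ∈ Finset.Icc 1 n, χ k - m * n‖ ≤ B) {s : ℂ} (hs : 0 < s.re) (hs₁ : s ≠ 1) :
    (s - 1) * LFunction χ s = m * s + s * (s - 1) * mellin (sumError (χ ·) m) (-s) := by
  obtain ⟨P, hPd, hP⟩ := exists_differentiable_eq_sub_one_mul_LFunction χ
  have hopen (σ : ℝ) : IsOpen {s : ℂ | σ < s.re} := isOpen_lt continuous_const continuous_re
  rw [← hP s hs₁]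
  refine AnalyticOnNhd.eqOn_of_preconnected_of_eventuallyEq (z₀ := 2) (U := {s | 0 < s.re})
    (g := fun s ↦ m * s + s * (s - 1) * mellin (sumError (χ ·) m) (-s))
    (hPd.differentiableOn.analyticOnNhd (hopen 0))
    (DifferentiableOn.analyticOnNhd (fun w (hw : 0 < w.re) ↦ ?_) (hopen 0))
    (convex_halfSpace_re_gt 0).isPreconnected (by simp) ?_ hs
  · have hd : DifferentiableAt ℂ (fun z ↦ mellin (sumError (χ ·) m) (-z)) w :=
      (differentiableAt_mellin_sumError hB (by simpa using hw)).comp w differentiableAt_id.neg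
    exact DifferentiableAt.differentiableWithinAt (by fun_prop)
  · filter_upwards [(hopen 1).mem_nhds (by simp)] with w (hw : 1 < w.re)
    rw [hP w (fun h ↦ by simp [h] at hw), DirichletCharacter.LFunction_eq_LSeries χ hw,
      sub_one_mul_LSeries_eq hB (DirichletCharacter.LSeriesSummable_of_one_lt_re χ hw) hw]

lemma exists_norm_sub_one_mul_LFunction_le_sq :
    ∃ A, ∀ s : ℂ, 1 / 2 ≤ s.re → s.re ≤ 2 → s ≠ 1 →
      ‖(s - 1) * LFunction χ s‖ ≤ A * (1 + |s.im|) ^ 2 := by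
  obtain ⟨m, B, hB⟩ := exists_norm_sum_sub_mul_le χ
  have hB₀ : 0 ≤ B := (norm_nonneg _).trans (hB 0)
  refine ⟨2 * ‖m‖ + 12 * (B + ‖m‖), fun s hs hs₂ hs₁ ↦ ?_⟩
  set R := mellin (sumError (χ ·) m) (-s)
  set V := 1 + |s.im|
  have hV : 1 ≤ V := le_add_of_nonneg_right (abs_nonneg _)
  have hnorm : ‖s‖ ≤ 2 * V := by
    have := norm_le_abs_re_add_abs_im s
    rw [abs_of_pos (by linarith)] at this
    linarith
  have hnorm₁ : ‖s - 1‖ ≤ 3 * V := by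
    have := norm_sub_le s 1
    rw [norm_one] at this
    linarith
  have hR : ‖R‖ ≤ 2 * (B + ‖m‖) := by
    refine (norm_mellin_sumError_neg_le hB (by linarith)).trans ?_
    rw [div_le_iff₀ (by linarith)]
    nlinarith [norm_nonneg m]
  rw [sub_one_mul_LFunction_eq hB (by linarith) hs₁]
  calc ‖m * s + s * (s - 1) * R‖ ≤ ‖m‖ * ‖s‖ + ‖s‖ * ‖s - 1‖ * ‖R‖ := by
        simpa only [norm_mul] using norm_add_le (m * s) (s * (s - 1) * R)
    _ ≤ ‖m‖ * (2 * V) + 2 * V * (3 * V) * (2 * (B + ‖m‖)) := by gcongr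
    _ ≤ (2 * ‖m‖ + 12 * (B + ‖m‖)) * V ^ 2 := by
        nlinarith [mul_nonneg (norm_nonneg m) (mul_nonneg (zero_le_one.trans hV) (sub_nonneg.2 hV))]

end

section

variable {q : ℕ} [NeZero q] (χ : DirichletCharacter ℂ q)

lemma exists_norm_LFunction_le_of_le_re {σ : ℝ} (hσ : 1 < σ) :
    ∃ K, 0 < K ∧ ∀ s : ℂ, σ ≤ s.re → ‖LFunction χ s‖ ≤ K := by
  have hsum : Summable fun n ↦ ‖LSeries.term (χ ·) σ n‖ :=
    (DirichletCharacter.LSeriesSummable_of_one_lt_re χ (by simpa using hσ)).norm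
  refine ⟨∑' n, ‖LSeries.term (χ ·) σ n‖ + 1,
    add_pos_of_nonneg_of_pos (tsum_nonneg fun _ ↦ norm_nonneg _) one_pos, fun s hs ↦ ?_⟩
  have hle := LSeries.norm_term_le_of_re_le_re (χ ·) (s := σ) (s' := s) (by simpa using hs)
  rw [DirichletCharacter.LFunction_eq_LSeries χ (hσ.trans_le hs)]
  calc ‖LSeries (χ ·) s‖ ≤ ∑' n, ‖LSeries.term (χ ·) s n‖ :=
        norm_tsum_le_tsum_norm (hsum.of_nonneg_of_le (fun _ ↦ norm_nonneg _) hle)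
    _ ≤ ∑' n, ‖LSeries.term (χ ·) σ n‖ :=
        (hsum.of_nonneg_of_le (fun _ ↦ norm_nonneg _) hle).tsum_le_tsum hle hsum
    _ ≤ _ := le_add_of_nonneg_right zero_le_one

-- Interpolation between growth of degree `2` on `re s = 1 / 2` and degree `1` on `re s = 1 + η`.
lemma exists_norm_sub_one_mul_LFunction_le_rpow {η : ℝ} (hη : 0 < η) (hη₁ : η ≤ 1 / 2) :
    ∃ C, 0 < C ∧ ∀ s : ℂ, 1 - η ≤ s.re → s.re ≤ 1 + η → s ≠ 1 →
      ‖(s - 1) * LFunction χ s‖ ≤ C * (1 + |s.im|) ^ (1 + 4 * η) := by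
  obtain ⟨P, hPd, hP⟩ := exists_differentiable_eq_sub_one_mul_LFunction χ
  obtain ⟨A, hA⟩ := exists_norm_sub_one_mul_LFunction_le_sq χ
  obtain ⟨K, hK₀, hK⟩ := exists_norm_LFunction_le_of_le_re χ (show 1 < 1 + η by linarith)
  have hleft (s : ℂ) (hs : s ∈ verticalClosedStrip (1 / 2) (1 + η)) :
      ‖P s‖ ≤ (|A| + ‖P 1‖ + K) * (1 + |s.im|) ^ (2 : ℝ) := by
    rw [Real.rpow_two]
    rcases eq_or_ne s 1 with rfl | hs₁
    · simp only [one_im, abs_zero, add_zero, one_pow, mul_one]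
      linarith [abs_nonneg A]
    · rw [hP s hs₁]
      refine (hA s hs.1 (by linarith [hs.2]) hs₁).trans ?_
      gcongr
      linarith [le_abs_self A, norm_nonneg (P 1)]
  have hright (s : ℂ) (hs : s.re = 1 + η) :
      ‖P s‖ ≤ (|A| + ‖P 1‖ + K) * (1 + |s.im|) ^ (1 : ℝ) := by
    have hs₁ : ‖s - 1‖ ≤ 1 + |s.im| := by
      have h := norm_le_abs_re_add_abs_im (s - 1)
      rw [sub_re, one_re, hs, add_sub_cancel_left, abs_of_pos hη, sub_im, one_im, sub_zero] at h
      linarith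
    rw [hP s fun h ↦ by simp [h, hη.ne'] at hs, norm_mul, Real.rpow_one, mul_comm]
    refine mul_le_mul ((hK s hs.ge).trans ?_) hs₁ (norm_nonneg _) (by positivity)
    linarith [abs_nonneg A, norm_nonneg (P 1)]
  obtain ⟨C, hC₀, hC⟩ := exists_norm_le_one_add_abs_im_rpow_of_mem_verticalClosedStrip
    (by linarith) zero_le_two zero_le_one hPd.diffContOnCl hleft hright
  refine ⟨C, hC₀, fun s hs hs' hs₁ ↦ ?_⟩
  rw [← hP s hs₁]
  refine (hC s ⟨by linarith, hs'⟩).trans ?_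
  have hθ : 1 - 4 * η ≤ (s.re - 1 / 2) / (1 + η - 1 / 2) := by
    rw [le_div_iff₀ (by linarith)]
    nlinarith
  refine mul_le_mul_of_nonneg_left (Real.rpow_le_rpow_of_exponent_le ?_ ?_) hC₀.le
  · exact le_add_of_nonneg_right (abs_nonneg _)
  · linarith

lemma exists_norm_LFunction_le_rpow {ε : ℝ} (hε : 0 < ε) :
    ∃ η > 0, ∃ C > 0, ∀ s : ℂ, 1 - η ≤ s.re → 1 ≤ |s.im| → ‖LFunction χ s‖ ≤ C * |s.im| ^ ε := by
  set η := min (ε / 4) (1 / 2)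
  have hη : 0 < η := by positivity
  have hηε : 4 * η ≤ ε := by linarith [min_le_left (ε / 4) (1 / 2)]
  obtain ⟨K, hK₀, hK⟩ := exists_norm_LFunction_le_of_le_re χ (show 1 < 1 + η by linarith)
  obtain ⟨C, hC₀, hC⟩ :=
    exists_norm_sub_one_mul_LFunction_le_rpow χ hη (min_le_right (ε / 4) (1 / 2))
  refine ⟨η, hη, K + C * 2 ^ (1 + 4 * η), by positivity, fun s hs ht ↦ ?_⟩
  have ht₀ : 0 < |s.im| := by linarith
  rcases le_total (1 + η) s.re with hs' | hs'
  · refine (hK s hs').trans ((le_add_of_nonneg_right ?_).trans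
      (le_mul_of_one_le_right ?_ (Real.one_le_rpow ht hε.le))) <;> positivity
  have him : |s.im| ≤ ‖s - 1‖ := by simpa using abs_im_le_norm (s - 1)
  have hs₁ : s ≠ 1 := fun h ↦ by norm_num [h] at ht
  have hmul : |s.im| * ‖LFunction χ s‖ ≤ |s.im| * (C * 2 ^ (1 + 4 * η) * |s.im| ^ (4 * η)) :=
    calc |s.im| * ‖LFunction χ s‖ ≤ ‖(s - 1) * LFunction χ s‖ := by rw [norm_mul]; gcongr
      _ ≤ C * (1 + |s.im|) ^ (1 + 4 * η) := hC s hs hs' hs₁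
      _ ≤ C * (2 * |s.im|) ^ (1 + 4 * η) := by gcongr; linarith
      _ = |s.im| * (C * 2 ^ (1 + 4 * η) * |s.im| ^ (4 * η)) := by
          rw [Real.mul_rpow zero_le_two ht₀.le, Real.rpow_add ht₀, Real.rpow_one]
          ring
  refine (le_of_mul_le_mul_left hmul ht₀).trans ?_
  gcongr
  exact le_add_of_nonneg_left hK₀.le

lemma re_im_le_of_mem_closedBall {s z : ℂ} {r : ℝ} (hr : r ≤ |s.im| / 2)
    (hz : z ∈ Metric.closedBall s r) :
    s.re - r ≤ z.re ∧ z.re ≤ s.re + r ∧ |s.im| / 2 ≤ |z.im| ∧ |z.im| ≤ 2 * |s.im| := by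
  have hnorm : ‖z - s‖ ≤ r := mem_closedBall_iff_norm.1 hz
  have hre := abs_le.1 ((abs_re_le_norm (z - s)).trans hnorm)
  have him := (abs_im_le_norm (z - s)).trans hnorm
  have h₁ := abs_sub_abs_le_abs_sub z.im s.im
  have h₂ := abs_sub_abs_le_abs_sub s.im z.im
  rw [abs_sub_comm] at h₂
  rw [sub_re] at hre
  rw [sub_im] at him
  exact ⟨by linarith, by linarith, by linarith, by linarith⟩

lemma exists_norm_deriv_LFunction_le_rpow {ε : ℝ} (hε : 0 < ε) :
    ∃ η > 0, ∃ C > 0, ∀ s : ℂ, 1 - η ≤ s.re → 2 ≤ |s.im| →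
      ‖deriv (LFunction χ) s‖ ≤ C * |s.im| ^ ε := by
  obtain ⟨η, hη, C, hC₀, hC⟩ := exists_norm_LFunction_le_rpow χ hε
  set r := min (η / 2) 1
  have hr : 0 < r := by positivity
  have hrη : 2 * r ≤ η := by linarith [min_le_left (η / 2) 1]
  refine ⟨r, hr, C * 2 ^ ε / r, by positivity, fun s hs ht ↦ ?_⟩
  have hball {z : ℂ} (hz : z ∈ Metric.closedBall s r) :=
    re_im_le_of_mem_closedBall ((min_le_right (η / 2) 1).trans (by linarith)) hz
  have hd : DifferentiableOn ℂ (LFunction χ) (Metric.closedBall s r) := fun z hz ↦ by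
    refine (DirichletCharacter.differentiableAt_LFunction χ z
      (.inl fun h ↦ ?_)).differentiableWithinAt
    have him := (hball hz).2.2.1
    rw [h, one_im, abs_zero] at him
    linarith
  have hcauchy := norm_deriv_le_of_forall_mem_sphere_norm_le hr (hd.diffContOnCl_ball subset_rfl)
    (C := C * 2 ^ ε * |s.im| ^ ε) fun z hz ↦ ?_
  · exact hcauchy.trans_eq (by ring)
  · obtain ⟨hre, -, him, him'⟩ := hball (Metric.sphere_subset_closedBall hz)
    refine (hC z (by linarith) (by linarith)).trans ?_
    rw [mul_assoc, ← Real.mul_rpow zero_le_two (abs_nonneg _)]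
    gcongr

end

lemma le_of_cube_le_mul_pow_four {h : ℝ → ℝ} {A D : ℝ} (hA : 0 < A) (hD : 0 < D)
    (hAD : 1 ≤ 16 * A * D ^ 4) (hh : ∀ x ∈ Ioc 0 1, 0 ≤ h x)
    (hpow : ∀ x ∈ Ioc 0 1, x ^ 3 ≤ A * h x ^ 4)
    (hlip : ∀ x ∈ Ioc 0 1, ∀ y ∈ Ioc 0 1, h y ≤ h x + D * |y - x|) {x : ℝ} (hx : x ∈ Ioc 0 1) :
    (16 * A * D ^ 3)⁻¹ ≤ h x := by
  set x₀ := (16 * A * D ^ 4)⁻¹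
  have hx₀ : x₀ ∈ Ioc 0 1 := ⟨by positivity, inv_le_one_of_one_le₀ hAD⟩
  have hDx₀ : (16 * A * D ^ 3)⁻¹ = D * x₀ := by simp only [x₀]; field_simp
  have hlarge {y : ℝ} (hy : y ∈ Ioc 0 1) (hxy : x₀ ≤ y) : 2 * (D * x₀) ≤ h y := by
    refine le_of_pow_le_pow_left₀ four_ne_zero (hh y hy) (le_of_mul_le_mul_left ?_ hA)
    calc A * (2 * (D * x₀)) ^ 4 = 16 * A * D ^ 4 * x₀ * x₀ ^ 3 := by ring
      _ = x₀ ^ 3 := by rw [mul_inv_cancel₀ (by positivity), one_mul]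
      _ ≤ y ^ 3 := pow_le_pow_left₀ hx₀.1.le hxy 3
      _ ≤ A * h y ^ 4 := hpow y hy
  have hpos : 0 < D * x₀ := mul_pos hD hx₀.1
  rw [hDx₀]
  rcases le_total x₀ x with hxx | hxx
  · linarith [hlarge hx hxx]
  · have hstep := hlip x hx x₀ hx₀
    rw [abs_of_nonneg (sub_nonneg.2 hxx)] at hstep
    nlinarith [hlarge hx₀ le_rfl, mul_pos hD hx.1]

lemma exists_norm_LFunctionTrivChar_le (q : ℕ) [NeZero q] :
    ∃ K > 0, ∀ x ∈ Ioc (0 : ℝ) 1, ‖LFunctionTrivChar q (1 + x)‖ ≤ K / x := by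
  have hcont : ContinuousOn (fun x : ℝ ↦ LFunctionTrivChar₁ q (1 + x)) (Icc 0 1) :=
    ((DirichletCharacter.differentiable_LFunctionTrivChar₁ q).continuous.comp
      (by fun_prop)).continuousOn
  obtain ⟨K, hK⟩ := isCompact_Icc.exists_bound_of_continuousOn hcont
  refine ⟨|K| + 1, by positivity, fun x ⟨hx, hx₁⟩ ↦ ?_⟩
  have hle := hK x ⟨hx.le, hx₁⟩
  simp only [LFunctionTrivChar₁] at hle
  rw [Function.update_of_ne (by simpa using hx.ne'), add_sub_cancel_left, norm_mul, norm_real,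
    Real.norm_eq_abs, abs_of_pos hx] at hle
  rw [le_div_iff₀ hx]
  linarith [le_abs_self K]

section

variable {q : ℕ} [NeZero q] (χ : DirichletCharacter ℂ q)

lemma exists_norm_LFunction_sub_le {ε : ℝ} (hε : 0 < ε) :
    ∃ η > 0, ∃ C > 0, ∀ z w : ℂ, 1 - η ≤ z.re → 1 - η ≤ w.re → z.im = w.im → 2 ≤ |w.im| →
      ‖LFunction χ z - LFunction χ w‖ ≤ C * |w.im| ^ ε * |z.re - w.re| := by
  obtain ⟨η, hη, C, hC₀, hC⟩ := exists_norm_deriv_LFunction_le_rpow χ hε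
  refine ⟨η, hη, C, hC₀, fun z w hz hw him ht ↦ ?_⟩
  have hline : Convex ℝ (Ici (1 - η) ×ℂ {w.im}) :=
    ((convex_Ici _).linear_preimage reLm).inter ((convex_singleton _).linear_preimage imLm)
  have hle := hline.norm_image_sub_le_of_norm_deriv_le (f := LFunction χ) (x := w) (y := z)
    (C := C * |w.im| ^ ε) (fun v hv ↦ ?_) (fun v hv ↦ ?_) ⟨hw, rfl⟩ ⟨hz, him⟩
  · have hsub : z - w = ((z.re - w.re : ℝ) : ℂ) := Complex.ext (by simp) (by simp [him])
    rwa [hsub, norm_real, Real.norm_eq_abs] at hle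
  · refine DirichletCharacter.differentiableAt_LFunction χ v (.inl fun h ↦ ?_)
    have him₀ : w.im = 0 := by simpa [h] using hv.2.symm
    norm_num [him₀] at ht
  · obtain ⟨hre, him' : v.im = w.im⟩ := hv
    rw [← him']
    exact hC v hre (him' ▸ ht)

lemma exists_cube_le_mul_norm_LFunction_pow_four {ε : ℝ} (hε : 0 < ε) :
    ∃ A > 0, ∀ t : ℝ, 2 ≤ |t| → ∀ x ∈ Ioc (0 : ℝ) 1,
      x ^ 3 ≤ A * |t| ^ ε * ‖LFunction χ (1 + x + I * t)‖ ^ 4 := by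
  obtain ⟨K, hK₀, hK⟩ := exists_norm_LFunctionTrivChar_le q
  obtain ⟨η, hη, C, hC₀, hC⟩ := exists_norm_LFunction_le_rpow (χ ^ 2) hε
  refine ⟨K ^ 3 * (C * 2 ^ ε), by positivity, fun t ht x hx ↦ ?_⟩
  obtain ⟨hx₀, hx₁⟩ := hx
  have habs : |2 * t| = 2 * |t| := by rw [abs_mul, abs_two]
  have hsq : ‖LFunction (χ ^ 2) (1 + x + 2 * I * t)‖ ≤ C * 2 ^ ε * |t| ^ ε := by
    have hle := hC (1 + x + 2 * I * t) (by simp; linarith) (by simp; linarith)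
    simpa [habs, Real.mul_rpow, mul_assoc] using hle
  have hprod := DirichletCharacter.norm_LFunction_product_ge_one χ hx₀ t
  rw [norm_mul, norm_mul, norm_pow, norm_pow] at hprod
  calc x ^ 3 ≤ x ^ 3 * (‖LFunctionTrivChar q (1 + x)‖ ^ 3 * ‖LFunction χ (1 + x + I * t)‖ ^ 4 *
        ‖LFunction (χ ^ 2) (1 + x + 2 * I * t)‖) := le_mul_of_one_le_right (by positivity) hprod
    _ ≤ x ^ 3 * ((K / x) ^ 3 * ‖LFunction χ (1 + x + I * t)‖ ^ 4 * (C * 2 ^ ε * |t| ^ ε)) := by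
        gcongr
        exact hK x ⟨hx₀, hx₁⟩
    _ = K ^ 3 * (C * 2 ^ ε) * |t| ^ ε * ‖LFunction χ (1 + x + I * t)‖ ^ 4 := by field_simp

lemma exists_le_norm_LFunction_of_one_lt_re {ε : ℝ} (hε : 0 < ε) :
    ∃ c > 0, ∀ s : ℂ, 1 < s.re → s.re ≤ 2 → 2 ≤ |s.im| → c * |s.im| ^ (-ε) ≤ ‖LFunction χ s‖ := by
  obtain ⟨A, hA₀, hA⟩ := exists_cube_le_mul_norm_LFunction_pow_four χ (show 0 < ε / 4 by positivity)
  obtain ⟨η, hη, D, hD₀, hD⟩ := exists_norm_LFunction_sub_le χ (show 0 < ε / 4 by positivity)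
  refine ⟨(16 * (A + 1) * (D + 1) ^ 3)⁻¹, by positivity, fun s hs hs₂ ht ↦ ?_⟩
  have ht₀ : 0 < |s.im| := by linarith
  set X := |s.im| ^ (ε / 4)
  have hX : 1 ≤ X := Real.one_le_rpow (by linarith) (by positivity)
  have hX4 : X ^ 4 = |s.im| ^ ε := by
    rw [← Real.rpow_natCast, ← Real.rpow_mul ht₀.le, Nat.cast_ofNat, div_mul_cancel₀ _ four_ne_zero]
  have hs_eq : (1 + (s.re - 1 : ℝ) + I * s.im : ℂ) = s := Complex.ext (by simp) (by simp)
  have key := le_of_cube_le_mul_pow_four (h := fun x ↦ ‖LFunction χ (1 + x + I * s.im)‖)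
    (A := (A + 1) * X) (D := (D + 1) * X) (by positivity) (by positivity) ?_
    (fun _ _ ↦ norm_nonneg _) (fun x hx ↦ (hA s.im ht x hx).trans (by gcongr; linarith)) ?_
    (show s.re - 1 ∈ Ioc 0 1 from ⟨by linarith, by linarith⟩)
  · rw [hs_eq] at key
    convert key using 1
    rw [Real.rpow_neg ht₀.le, ← hX4, ← mul_inv]
    ring
  · have hA₁ : 1 ≤ (A + 1) * X := by nlinarith
    have hD₁ : 1 ≤ ((D + 1) * X) ^ 4 := one_le_pow₀ (by nlinarith)
    nlinarith
  · intro x hx y hy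
    have hle := hD (1 + y + I * s.im) (1 + x + I * s.im) (by simp; linarith [hy.1])
      (by simp; linarith [hx.1]) (by simp) (by simpa using ht)
    simp only [add_im, one_im, ofReal_im, add_zero, mul_im, I_re, mul_zero, I_im, ofReal_re,
      one_mul, zero_add, add_re, one_re, mul_re, zero_mul, sub_self,
      add_sub_add_left_eq_sub] at hle
    have htri := norm_sub_norm_le (LFunction χ (1 + y + I * s.im)) (LFunction χ (1 + x + I * s.im))
    nlinarith [abs_nonneg (y - x)]

lemma rpow_neg_le_one {t ε : ℝ} (ht : 1 ≤ t) (hε : 0 ≤ ε) : t ^ (-ε) ≤ 1 :=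
  Real.rpow_le_one_of_one_le_of_nonpos ht (neg_nonpos.2 hε)

lemma exists_le_norm_LFunction {ε : ℝ} (hε : 0 < ε) :
    ∃ κ > 0, ∃ c > 0, ∀ s : ℂ, 2 ≤ |s.im| → 1 - κ * |s.im| ^ (-ε) ≤ s.re → s.re ≤ 2 →
      c * |s.im| ^ (-ε) ≤ ‖LFunction χ s‖ := by
  obtain ⟨c, hc₀, hc⟩ := exists_le_norm_LFunction_of_one_lt_re χ (half_pos hε)
  obtain ⟨η, hη, D, hD₀, hD⟩ := exists_norm_LFunction_sub_le χ (half_pos hε)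
  set κ := min (min η 1) (c / (4 * D))
  have hκ : 0 < κ := by positivity
  have hκη : κ ≤ η := (min_le_left _ _).trans (min_le_left _ _)
  have hκ₁ : κ ≤ 1 := (min_le_left _ _).trans (min_le_right _ _)
  have hκD : 2 * D * κ ≤ c / 2 := by
    have : κ * (4 * D) ≤ c := (le_div_iff₀ (by positivity)).1 (min_le_right _ _)
    linarith
  refine ⟨κ, hκ, c / 2, by positivity, fun s ht hs hs₂ ↦ ?_⟩
  have ht₀ : 0 < |s.im| := by linarith
  set Y := |s.im| ^ (-ε)
  have hY₀ : 0 < Y := by positivity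
  have hY₁ : Y ≤ 1 := rpow_neg_le_one (by linarith) hε.le
  have hYY : Y ≤ |s.im| ^ (-(ε / 2)) := Real.rpow_le_rpow_of_exponent_le (by linarith) (by linarith)
  rcases lt_or_ge 1 s.re with h₁ | h₁
  · refine le_trans ?_ (hc s h₁ hs₂ ht)
    gcongr
    linarith
  · set w : ℂ := ⟨1 + κ * Y, s.im⟩
    have hκY : κ * Y ≤ κ := mul_le_of_le_one_right hκ.le hY₁
    have hw := hc w (by simp only [w]; nlinarith) (by simp only [w]; linarith) ht
    have hsw := hD w s (by simp only [w]; nlinarith) (by linarith) rfl ht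
    have hre : |w.re - s.re| ≤ 2 * κ * Y := by
      simp only [w]
      rw [abs_of_nonneg (by nlinarith)]
      linarith
    have hmul : |s.im| ^ (ε / 2) * Y = |s.im| ^ (-(ε / 2)) := by
      rw [← Real.rpow_add ht₀]; congr 1; ring
    have hdiff : ‖LFunction χ w - LFunction χ s‖ ≤ c / 2 * |s.im| ^ (-(ε / 2)) :=
      calc _ ≤ D * |s.im| ^ (ε / 2) * (2 * κ * Y) := hsw.trans (by gcongr)
        _ = 2 * D * κ * |s.im| ^ (-(ε / 2)) := by rw [← hmul]; ring
        _ ≤ _ := by gcongr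
    have htri := norm_sub_norm_le (LFunction χ w) (LFunction χ s)
    simp only [w] at hw htri hdiff
    nlinarith

end

/-! ### Subpolynomial growth of logarithmic derivatives -/

/-- Analyticity on the closed half-plane `1 ≤ re s`, with growth `O(|im s| ^ ε)` for every `ε > 0`
in a region `1 - κ |im s| ^ (-ε) ≤ re s ≤ 2` reaching to the left of the line `re s = 1`. This is
what a Tauberian theorem with remainder asks of a Dirichlet series with its pole removed. -/
structure HasSubpolynomialGrowth (G : ℂ → ℂ) : Prop where
  analyticAt : ∀ s : ℂ, 1 ≤ s.re → AnalyticAt ℂ G s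
  exists_norm_le : ∀ ε > (0 : ℝ), ∃ κ > (0 : ℝ), ∃ M : ℝ, ∀ s : ℂ, 2 ≤ |s.im| →
    1 - κ * |s.im| ^ (-ε) ≤ s.re → s.re ≤ 2 → DifferentiableAt ℂ G s ∧ ‖G s‖ ≤ M * |s.im| ^ ε

namespace HasSubpolynomialGrowth
variable {G G₁ G₂ : ℂ → ℂ}

protected lemma const_mul (hG : HasSubpolynomialGrowth G) (c : ℂ) :
    HasSubpolynomialGrowth fun s ↦ c * G s where
  analyticAt s hs := analyticAt_const.mul (hG.analyticAt s hs)
  exists_norm_le ε hε := by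
    obtain ⟨κ, hκ, M, hM⟩ := hG.exists_norm_le ε hε
    refine ⟨κ, hκ, ‖c‖ * M, fun s ht hs hs₂ ↦ ⟨(hM s ht hs hs₂).1.const_mul c, ?_⟩⟩
    rw [norm_mul, mul_assoc]
    gcongr
    exact (hM s ht hs hs₂).2

protected lemma add (h₁ : HasSubpolynomialGrowth G₁) (h₂ : HasSubpolynomialGrowth G₂) :
    HasSubpolynomialGrowth fun s ↦ G₁ s + G₂ s where
  analyticAt s hs := (h₁.analyticAt s hs).add (h₂.analyticAt s hs)
  exists_norm_le ε hε := by
    obtain ⟨κ₁, hκ₁, M₁, hM₁⟩ := h₁.exists_norm_le ε hε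
    obtain ⟨κ₂, hκ₂, M₂, hM₂⟩ := h₂.exists_norm_le ε hε
    refine ⟨min κ₁ κ₂, lt_min hκ₁ hκ₂, M₁ + M₂, fun s ht hs hs₂ ↦ ?_⟩
    have hpos : 0 ≤ |s.im| ^ (-ε) := by positivity
    obtain ⟨hd₁, hle₁⟩ := hM₁ s ht (by nlinarith [min_le_left κ₁ κ₂]) hs₂
    obtain ⟨hd₂, hle₂⟩ := hM₂ s ht (by nlinarith [min_le_right κ₁ κ₂]) hs₂
    exact ⟨hd₁.add hd₂, (norm_add_le _ _).trans (by linarith)⟩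

protected lemma sum {ι : Type*} {G : ι → ℂ → ℂ} (S : Finset ι)
    (hG : ∀ i ∈ S, HasSubpolynomialGrowth (G i)) :
    HasSubpolynomialGrowth fun s ↦ ∑ i ∈ S, G i s := by
  classical
  induction S using Finset.induction_on with
  | empty => exact ⟨fun _ _ ↦ by simpa using analyticAt_const, fun _ _ ↦ ⟨1, one_pos, 0, by simp⟩⟩
  | insert i S hi ih =>
    simp only [Finset.sum_insert hi]
    exact (hG i (Finset.mem_insert_self i S)).add
      (ih fun j hj ↦ hG j (Finset.mem_insert_of_mem hj))

end HasSubpolynomialGrowth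

section

variable {q : ℕ} [NeZero q] (χ : DirichletCharacter ℂ q)

lemma exists_norm_logDeriv_LFunction_le {ε : ℝ} (hε : 0 < ε) :
    ∃ κ > 0, ∃ M, ∀ s : ℂ, 2 ≤ |s.im| → 1 - κ * |s.im| ^ (-ε) ≤ s.re → s.re ≤ 2 →
      LFunction χ s ≠ 0 ∧ ‖deriv (LFunction χ) s / LFunction χ s‖ ≤ M * |s.im| ^ ε := by
  obtain ⟨κ, hκ, c, hc₀, hc⟩ := exists_le_norm_LFunction χ (half_pos hε)
  obtain ⟨η, hη, D, hD₀, hD⟩ := exists_norm_deriv_LFunction_le_rpow χ (half_pos hε)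
  refine ⟨min κ η, lt_min hκ hη, D / c, fun s ht hs hs₂ ↦ ?_⟩
  have ht₀ : 0 < |s.im| := by linarith
  have hmono : |s.im| ^ (-ε) ≤ |s.im| ^ (-(ε / 2)) :=
    Real.rpow_le_rpow_of_exponent_le (by linarith) (by linarith)
  have hlower := hc s ht (hs.trans' (by gcongr; exact min_le_left _ _)) hs₂
  have hupper := hD s (hs.trans' ?_) ht
  · have hpos : 0 < c * |s.im| ^ (-(ε / 2)) := by positivity
    refine ⟨norm_pos_iff.1 (hpos.trans_le hlower), ?_⟩
    calc ‖deriv (LFunction χ) s / LFunction χ s‖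
        ≤ D * |s.im| ^ (ε / 2) / (c * |s.im| ^ (-(ε / 2))) := by rw [norm_div]; gcongr
      _ = D / c * |s.im| ^ ε := by
          rw [Real.rpow_neg ht₀.le, ← add_halves ε, Real.rpow_add ht₀, add_halves]
          field_simp
  · have hle : min κ η * |s.im| ^ (-ε) ≤ η * 1 := by
      gcongr
      · exact min_le_right _ _
      · exact rpow_neg_le_one (by linarith) hε.le
    linarith

variable {χ} in
lemma hasSubpolynomialGrowth_logDeriv_LFunction (hχ : χ ≠ 1) :
    HasSubpolynomialGrowth fun s ↦ deriv (LFunction χ) s / LFunction χ s where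
  analyticAt s hs := by
    have h := (DirichletCharacter.differentiable_LFunction hχ).analyticAt s
    exact h.deriv.div h (χ.LFunction_ne_zero_of_one_le_re (.inl hχ) hs)
  exists_norm_le ε hε := by
    obtain ⟨κ, hκ, M, hM⟩ := exists_norm_logDeriv_LFunction_le χ hε
    refine ⟨κ, hκ, M, fun s ht hs hs₂ ↦ ⟨?_, (hM s ht hs hs₂).2⟩⟩
    have h := (DirichletCharacter.differentiable_LFunction hχ).analyticAt s
    exact (h.deriv.div h (hM s ht hs hs₂).1).differentiableAt

variable (q) in
lemma hasSubpolynomialGrowth_logDeriv_LFunctionTrivChar₁ :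
    HasSubpolynomialGrowth fun s ↦ deriv (LFunctionTrivChar₁ q) s / LFunctionTrivChar₁ q s := by
  have han (s : ℂ) := (DirichletCharacter.differentiable_LFunctionTrivChar₁ q).analyticAt s
  have hne {s : ℂ} (hs₁ : s ≠ 1) (hs : LFunctionTrivChar q s ≠ 0) : LFunctionTrivChar₁ q s ≠ 0 := by
    rw [LFunctionTrivChar₁, Function.update_of_ne hs₁]
    exact mul_ne_zero (sub_ne_zero.2 hs₁) hs
  refine ⟨fun s hs ↦ (han s).deriv.div (han s) ?_, fun ε hε ↦ ?_⟩
  · rcases eq_or_ne s 1 with rfl | hs₁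
    · exact DirichletCharacter.LFunctionTrivChar₁_apply_one_ne_zero q
    · exact hne hs₁ (DirichletCharacter.LFunction_ne_zero_of_one_le_re 1 (.inr hs₁) hs)
  obtain ⟨κ, hκ, M, hM⟩ := exists_norm_logDeriv_LFunction_le (1 : DirichletCharacter ℂ q) hε
  refine ⟨κ, hκ, 1 + M, fun s ht hs hs₂ ↦ ?_⟩
  obtain ⟨hL, hle⟩ := hM s ht hs hs₂
  have hs₁ : s ≠ 1 := fun h ↦ by norm_num [h] at ht
  refine ⟨((han s).deriv.div (han s) (hne hs₁ hL)).differentiableAt, ?_⟩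
  have hlog : deriv (LFunctionTrivChar₁ q) s / LFunctionTrivChar₁ q s =
      (s - 1)⁻¹ + deriv (LFunctionTrivChar q) s / LFunctionTrivChar q s := by
    have := sub_ne_zero.2 hs₁
    rw [DirichletCharacter.deriv_LFunctionTrivChar₁_apply_of_ne_one q hs₁, LFunctionTrivChar₁,
      Function.update_of_ne hs₁]
    field_simp
    ring
  have hinv : ‖(s - 1)⁻¹‖ ≤ 1 := by
    have him : |s.im| ≤ ‖s - 1‖ := by simpa using abs_im_le_norm (s - 1)
    rw [norm_inv]
    exact inv_le_one_of_one_le₀ (by linarith)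
  have hone : 1 ≤ |s.im| ^ ε := Real.one_le_rpow (by linarith) hε.le
  rw [hlog]
  exact (norm_add_le _ _).trans (by linarith)

lemma hasSubpolynomialGrowth_LFunctionResidueClassAux (a : ZMod q) :
    HasSubpolynomialGrowth (ArithmeticFunction.vonMangoldt.LFunctionResidueClassAux a) := by
  have hsum := HasSubpolynomialGrowth.sum ({1}ᶜ : Finset (DirichletCharacter ℂ q)) fun χ hχ ↦
    (hasSubpolynomialGrowth_logDeriv_LFunction (χ := χ) (by simpa using hχ)).const_mul (-χ a⁻¹)
  convert (((hasSubpolynomialGrowth_logDeriv_LFunctionTrivChar₁ q).const_mul (-1)).add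
    hsum).const_mul (q.totient : ℂ)⁻¹ using 2 with s
  simp only [ArithmeticFunction.vonMangoldt.LFunctionResidueClassAux, sub_eq_add_neg,
    ← Finset.sum_neg_distrib, mul_div_assoc, neg_mul, one_mul, neg_div]
  congr!

end

namespace HasSubpolynomialGrowth
variable {G : ℂ → ℂ}

lemma exists_norm_div_le_on_closedBall (hG : HasSubpolynomialGrowth G) {ε : ℝ} (hε : 0 < ε) :
    ∃ κ > 0, ∃ M, ∀ s : ℂ, 1 ≤ s.re → s.re ≤ 3 / 2 → 4 ≤ |s.im| →
      ∀ z ∈ Metric.closedBall s (κ * (2 * |s.im|) ^ (-ε)),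
        DifferentiableAt ℂ (fun z ↦ G z / (z * (z + 1))) z ∧
          ‖G z / (z * (z + 1))‖ ≤ M * (2 * |s.im|) ^ ε * |s.im| ^ (-2 : ℝ) := by
  obtain ⟨κ, hκ, M, hM⟩ := hG.exists_norm_le ε hε
  refine ⟨min κ (1 / 2), by positivity, |M| * 4, fun s hs hs' ht z hz ↦ ?_⟩
  have ht₀ : 0 < |s.im| := by linarith
  have hrad : min κ (1 / 2) * (2 * |s.im|) ^ (-ε) ≤ 1 / 2 * 1 := by
    gcongr
    · exact min_le_right _ _
    · exact rpow_neg_le_one (by linarith) hε.le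
  obtain ⟨hre, hre', him, him'⟩ := re_im_le_of_mem_closedBall (by linarith) hz
  have hκz : min κ (1 / 2) * (2 * |s.im|) ^ (-ε) ≤ κ * |z.im| ^ (-ε) := by
    gcongr ?_ * ?_
    · exact min_le_left _ _
    · exact Real.rpow_le_rpow_of_nonpos (by linarith) him' (by linarith)
  obtain ⟨hd, hle⟩ := hM z (by linarith) (by linarith) (by linarith)
  have hz₀ : |s.im| / 2 ≤ ‖z‖ := him.trans (abs_im_le_norm z)
  have hz₁ : |s.im| / 2 ≤ ‖z + 1‖ := him.trans (by simpa using abs_im_le_norm (z + 1))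
  have hne : z * (z + 1) ≠ 0 := by
    rw [← norm_pos_iff, norm_mul]
    exact mul_pos (by linarith) (by linarith)
  refine ⟨hd.div (by fun_prop) hne, ?_⟩
  calc ‖G z / (z * (z + 1))‖
      ≤ |M| * (2 * |s.im|) ^ ε / (|s.im| / 2 * (|s.im| / 2)) := by
        rw [norm_div, norm_mul]
        gcongr
        refine hle.trans ?_
        gcongr
        exact le_abs_self M
    _ = |M| * 4 * (2 * |s.im|) ^ ε * |s.im| ^ (-2 : ℝ) := by
        rw [Real.rpow_neg ht₀.le, Real.rpow_two]
        field_simp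
        ring

lemma exists_norm_iteratedDeriv_le_of_four_le_abs_im (hG : HasSubpolynomialGrowth G) (k : ℕ) :
    ∃ C, ∀ s : ℂ, 1 ≤ s.re → s.re ≤ 3 / 2 → 4 ≤ |s.im| →
      ‖iteratedDeriv k (fun z ↦ G z / (z * (z + 1))) s‖ ≤ C * |s.im| ^ (-(3 / 2) : ℝ) := by
  set ε : ℝ := 1 / (2 * (k + 1)) with hε
  obtain ⟨κ, hκ, M, hM⟩ := hG.exists_norm_div_le_on_closedBall (ε := ε) (by positivity)
  refine ⟨k.factorial * (M * 2 ^ (1 / 2 : ℝ)) / κ ^ k, fun s hs hs' ht ↦ ?_⟩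
  have ht₀ : 0 < |s.im| := by linarith
  have hball := hM s hs hs' ht
  have hcauchy := norm_iteratedDeriv_le_of_forall_mem_sphere_norm_le k
    (R := κ * (2 * |s.im|) ^ (-ε)) (by positivity)
    (DifferentiableOn.diffContOnCl_ball
      (fun z hz ↦ (hball z hz).1.differentiableWithinAt) subset_rfl)
    fun z hz ↦ (hball z (Metric.sphere_subset_closedBall hz)).2
  refine hcauchy.trans_eq ?_
  have hpow : (2 * |s.im|) ^ ε * ((2 * |s.im|) ^ ε) ^ k =
      2 ^ (1 / 2 : ℝ) * |s.im| ^ (1 / 2 : ℝ) := by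
    rw [← pow_succ', ← Real.rpow_mul_natCast (by positivity),
      ← Real.mul_rpow zero_le_two ht₀.le, hε]
    congr 1
    push_cast
    field_simp
  have hsplit : |s.im| ^ (-(3 / 2) : ℝ) = |s.im| ^ (1 / 2 : ℝ) * |s.im| ^ (-2 : ℝ) := by
    rw [← Real.rpow_add ht₀]
    norm_num
  calc k.factorial * (M * (2 * |s.im|) ^ ε * |s.im| ^ (-2 : ℝ)) / (κ * (2 * |s.im|) ^ (-ε)) ^ k
      = k.factorial * M / κ ^ k * ((2 * |s.im|) ^ ε * ((2 * |s.im|) ^ ε) ^ k) *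
          |s.im| ^ (-2 : ℝ) := by
        rw [Real.rpow_neg (by positivity) ε, mul_pow, inv_pow]
        field_simp
    _ = k.factorial * (M * 2 ^ (1 / 2 : ℝ)) / κ ^ k * |s.im| ^ (-(3 / 2) : ℝ) := by
        rw [hpow, hsplit]
        ring

lemma analyticAt_div (hG : HasSubpolynomialGrowth G) {s : ℂ} (hs : 1 ≤ s.re) :
    AnalyticAt ℂ (fun z ↦ G z / (z * (z + 1))) s := by
  have hs₀ : s ≠ 0 := fun h ↦ by norm_num [h] at hs
  have hs₁ : s + 1 ≠ 0 := fun h ↦ by norm_num [eq_neg_of_add_eq_zero_left h] at hs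
  exact (hG.analyticAt s hs).div (by fun_prop) (mul_ne_zero hs₀ hs₁)

lemma exists_norm_iteratedDeriv_div_le (hG : HasSubpolynomialGrowth G) (k : ℕ) :
    ∃ C, ∀ s : ℂ, 1 ≤ s.re → s.re ≤ 3 / 2 →
      ‖iteratedDeriv k (fun z ↦ G z / (z * (z + 1))) s‖ ≤ C * (1 + |s.im|) ^ (-(3 / 2) : ℝ) := by
  set F := iteratedDeriv k fun z ↦ G z / (z * (z + 1)) with hF
  have hcont : ContinuousOn (fun s ↦ ‖F s‖ * (1 + |s.im|) ^ (3 / 2 : ℝ))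
      (Icc 1 (3 / 2) ×ℂ Icc (-4) 4) := by
    refine ContinuousOn.mul (fun s hs ↦ ?_) ?_
    · rw [hF, iteratedDeriv_eq_iterate]
      exact ((hG.analyticAt_div hs.1.1).iterated_deriv k).continuousAt.continuousWithinAt.norm
    · exact ContinuousOn.rpow_const (by fun_prop) fun s _ ↦ .inl (by positivity)
  obtain ⟨C₁, hC₁⟩ := (isCompact_Icc.reProdIm isCompact_Icc).exists_bound_of_continuousOn hcont
  obtain ⟨C₂, hC₂⟩ := hG.exists_norm_iteratedDeriv_le_of_four_le_abs_im k
  refine ⟨max C₁ (|C₂| * 2 ^ (3 / 2 : ℝ)), fun s hs hs' ↦ ?_⟩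
  rw [Real.rpow_neg (by positivity), ← div_eq_mul_inv, le_div_iff₀ (by positivity)]
  rcases le_total |s.im| 4 with ht | ht
  · exact ((le_abs_self _).trans (hC₁ s ⟨⟨hs, hs'⟩, abs_le.1 ht⟩)).trans (le_max_left _ _)
  · have ht₀ : 0 < |s.im| := by linarith
    calc ‖F s‖ * (1 + |s.im|) ^ (3 / 2 : ℝ)
        ≤ |C₂| * |s.im| ^ (-(3 / 2) : ℝ) * (2 * |s.im|) ^ (3 / 2 : ℝ) := by
          gcongr
          · exact (hC₂ s hs hs' ht).trans (by gcongr; exact le_abs_self C₂)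
          · linarith
      _ = |C₂| * 2 ^ (3 / 2 : ℝ) := by
          rw [Real.mul_rpow zero_le_two ht₀.le, Real.rpow_neg ht₀.le]
          field_simp
      _ ≤ _ := le_max_right _ _

end HasSubpolynomialGrowth

/-! ### Mellin inversion with logarithmic weights -/

section

variable {E : Type*} [NormedAddCommGroup E] {g : ℝ → E} {b : ℝ}

lemma isBigO_nhdsGT_zero_of_eq_zero (hzero : ∀ t ≤ 1, g t = 0) (c : ℝ) :
    g =O[𝓝[>] 0] fun t ↦ t ^ c := by
  refine .of_bound 0 ?_
  filter_upwards [nhdsWithin_le_nhds (Iio_mem_nhds (zero_lt_one (α := ℝ)))] with t ht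
  simp [hzero t (le_of_lt ht)]

variable [NormedSpace ℝ E]

lemma isBigO_log_pow_smul_of_forall_gt (hO : ∀ c > b, g =O[atTop] fun t ↦ t ^ c) (k : ℕ) :
    ∀ c > b, (fun t ↦ Real.log t ^ k • g t) =O[atTop] fun t ↦ t ^ c := by
  induction k with
  | zero => simpa using hO
  | succ k ih =>
    intro c hc
    have h := ih ((b + c) / 2) (by linarith)
    rw [← neg_neg ((b + c) / 2)] at h
    simpa [pow_succ', smul_smul] using isBigO_rpow_top_log_smul (b := -c) (by linarith) h

lemma continuousOn_log_pow_smul (hcont : ContinuousOn g (Ioi 0)) (k : ℕ) :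
    ContinuousOn (fun t ↦ Real.log t ^ k • g t) (Ioi 0) :=
  ((Real.continuousOn_log.mono fun _ ht ↦ ht.ne').pow k).smul hcont

end

section

variable {E : Type*} [NormedAddCommGroup E] [NormedSpace ℂ E] {g : ℝ → E} {H : ℂ → E} {b : ℝ}

lemma mellinConvergent_neg_of_forall_gt (hcont : ContinuousOn g (Ioi 0))
    (hO : ∀ c > b, g =O[atTop] fun t ↦ t ^ c) (hzero : ∀ t ≤ 1, g t = 0) {s : ℂ} (hs : b < s.re) :
    MellinConvergent g (-s) := by
  have hO' : g =O[atTop] fun t ↦ t ^ (-(-((b + s.re) / 2))) := by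
    simpa using hO ((b + s.re) / 2) (by linarith)
  exact mellinConvergent_of_isBigO_rpow (hcont.locallyIntegrableOn measurableSet_Ioi) hO'
    (by rw [neg_re]; linarith) (isBigO_nhdsGT_zero_of_eq_zero hzero _)
    (show -s.re - 1 < (-s).re by rw [neg_re]; linarith)

lemma hasDerivAt_mellin_neg_of_forall_gt (hcont : ContinuousOn g (Ioi 0))
    (hO : ∀ c > b, g =O[atTop] fun t ↦ t ^ c) (hzero : ∀ t ≤ 1, g t = 0) {s : ℂ} (hs : b < s.re) :
    HasDerivAt (mellin g) (mellin (fun t ↦ Real.log t • g t) (-s)) (-s) := by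
  have hO' : g =O[atTop] fun t ↦ t ^ (-(-((b + s.re) / 2))) := by
    simpa using hO ((b + s.re) / 2) (by linarith)
  exact (mellin_hasDerivAt_of_isBigO_rpow (hcont.locallyIntegrableOn measurableSet_Ioi) hO'
    (by rw [neg_re]; linarith) (isBigO_nhdsGT_zero_of_eq_zero hzero _)
    (show -s.re - 1 < (-s).re by rw [neg_re]; linarith)).2

lemma mellin_log_smul_neg (hcont : ContinuousOn g (Ioi 0))
    (hO : ∀ c > b, g =O[atTop] fun t ↦ t ^ c) (hzero : ∀ t ≤ 1, g t = 0)
    (hH : ∀ s : ℂ, b < s.re → mellin g (-s) = H s) {s : ℂ} (hs : b < s.re) :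
    mellin (fun t ↦ Real.log t • g t) (-s) = -deriv H s := by
  have hopen : {z : ℂ | b < z.re} ∈ 𝓝 s := (isOpen_lt continuous_const continuous_re).mem_nhds hs
  have hderiv := (hasDerivAt_mellin_neg_of_forall_gt hcont hO hzero hs).scomp s (hasDerivAt_neg s)
  have hcongr : H =ᶠ[𝓝 s] mellin g ∘ Neg.neg := by
    filter_upwards [hopen] with z hz using (hH z hz).symm
  rw [hcongr.deriv_eq, hderiv.deriv, neg_one_smul, neg_neg]

lemma mellin_log_pow_smul_neg (hcont : ContinuousOn g (Ioi 0))
    (hO : ∀ c > b, g =O[atTop] fun t ↦ t ^ c) (hzero : ∀ t ≤ 1, g t = 0)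
    (hH : ∀ s : ℂ, b < s.re → mellin g (-s) = H s) (k : ℕ) {s : ℂ} (hs : b < s.re) :
    mellin (fun t ↦ Real.log t ^ k • g t) (-s) = (-1 : ℂ) ^ k • iteratedDeriv k H s := by
  induction k generalizing g H with
  | zero => simp [hH s hs]
  | succ k ih =>
    have h := ih (by simpa using continuousOn_log_pow_smul hcont 1)
      (by simpa using isBigO_log_pow_smul_of_forall_gt hO 1)
      (fun t ht ↦ by simp [hzero t ht]) fun z hz ↦ mellin_log_smul_neg hcont hO hzero hH hz
    simpa [smul_smul, pow_succ, iteratedDeriv_succ', iteratedDeriv_fun_neg] using h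

lemma norm_mellinInv_le {F : ℂ → E} {w : ℝ → ℝ} (hw : Integrable w) {σ : ℝ}
    (hF : ∀ y : ℝ, ‖F (σ + y * I)‖ ≤ w y) {x : ℝ} (hx : 0 < x) :
    ‖mellinInv σ F x‖ ≤ 1 / (2 * Real.pi) * (x ^ (-σ) * ∫ y, w y) := by
  have hpi : 0 ≤ 1 / (2 * Real.pi) := by positivity
  rw [mellinInv, norm_smul, Real.norm_of_nonneg hpi, ← integral_const_mul]
  gcongr
  refine norm_integral_le_of_norm_le (hw.const_mul _) (.of_forall fun y ↦ ?_)
  rw [norm_smul, norm_cpow_eq_rpow_re_of_pos hx]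
  simpa using mul_le_mul_of_nonneg_left (hF y) (Real.rpow_nonneg hx.le _)

lemma exists_norm_log_pow_smul_le [CompleteSpace E] (hcont : ContinuousOn g (Ioi 0))
    (hO : ∀ c > b, g =O[atTop] fun t ↦ t ^ c) (hzero : ∀ t ≤ 1, g t = 0)
    (hH : ∀ s : ℂ, b < s.re → mellin g (-s) = H s) (k : ℕ) {δ : ℝ} (hδ : 0 < δ) {w : ℝ → ℝ}
    (hw : Integrable w)
    (hHk : ∀ s : ℂ, b < s.re → s.re ≤ b + δ → ‖iteratedDeriv k H s‖ ≤ w s.im) :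
    ∃ K, ∀ x : ℝ, 0 < x → ‖Real.log x ^ k • g x‖ ≤ K * x ^ b := by
  refine ⟨1 / (2 * Real.pi) * ∫ y, w (-y), fun x hx ↦ ?_⟩
  set φ : ℝ → E := fun t ↦ Real.log t ^ k • g t with hφ
  have hφcont : ContinuousOn φ (Ioi 0) := continuousOn_log_pow_smul hcont k
  have hφO := isBigO_log_pow_smul_of_forall_gt hO k
  have hφzero : ∀ t ≤ 1, φ t = 0 := fun t ht ↦ by simp [hφ, hzero t ht]
  have hright : ∀ σ > b, σ ≤ b + δ → ‖φ x‖ ≤ 1 / (2 * Real.pi) * (∫ y, w (-y)) * x ^ σ := by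
    intro σ hσ hσ'
    have hline (y : ℝ) : ((-σ : ℝ) : ℂ) + y * I = -(σ + (-y : ℝ) * I) := by push_cast; ring
    have hre (y : ℝ) : ((σ : ℂ) + (-y : ℝ) * I).re = σ := by simp
    have hbound (y : ℝ) : ‖mellin φ ((-σ : ℝ) + y * I)‖ ≤ w (-y) := by
      rw [hline, mellin_log_pow_smul_neg hcont hO hzero hH k (by rwa [hre]), norm_smul]
      simpa using hHk (σ + (-y : ℝ) * I) (by rwa [hre]) (by rwa [hre])
    have hvert : VerticalIntegrable (mellin φ) (-σ : ℝ) := by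
      refine hw.comp_neg.mono' (Continuous.aestronglyMeasurable ?_) (.of_forall hbound)
      refine continuous_iff_continuousAt.2 fun y ↦ .comp (g := mellin φ) ?_ (by fun_prop)
      rw [hline]
      exact (hasDerivAt_mellin_neg_of_forall_gt hφcont hφO hφzero (by rwa [hre])).continuousAt
    have hconv : MellinConvergent φ (-σ : ℝ) := by
      simpa using mellinConvergent_neg_of_forall_gt (s := σ) hφcont hφO hφzero (by simpa)
    rw [← mellinInv_mellin_eq (-σ) φ hx hconv hvert (hφcont.continuousAt (Ioi_mem_nhds hx))]
    exact (norm_mellinInv_le hw.comp_neg hbound hx).trans_eq (by rw [neg_neg]; ring)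
  have htendsto : Tendsto (fun σ : ℝ ↦ 1 / (2 * Real.pi) * (∫ y, w (-y)) * x ^ σ) (𝓝[>] b)
      (𝓝 (1 / (2 * Real.pi) * (∫ y, w (-y)) * x ^ b)) :=
    ((Real.continuousAt_const_rpow hx.ne').mono_left nhdsWithin_le_nhds).const_mul _
  refine ge_of_tendsto htendsto ?_
  filter_upwards [Ioc_mem_nhdsGT (lt_add_of_pos_right b hδ)] with σ hσ using hright σ hσ.1 hσ.2

end

/-! ### Riesz means -/

section

variable {κ : ℝ → ℂ} {f : ℕ → ℂ} {s : ℂ}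

lemma mellin_mul_comp_natCast_mul (κ : ℝ → ℂ) (hf₀ : f 0 = 0) (s : ℂ) (n : ℕ) :
    mellin (fun t ↦ f n * κ (n * t)) s = LSeries.term f s n * mellin κ s := by
  rcases n.eq_zero_or_pos with rfl | hn
  · simp [hf₀, mellin]
  · have h := mellin_const_smul (fun t ↦ κ (n * t)) s (f n)
    simp only [smul_eq_mul, mellin_comp_mul_left κ s (Nat.cast_pos.2 hn), cpow_neg] at h
    rw [h, LSeries.term_of_ne_zero hn.ne']
    push_cast
    ring

lemma integral_norm_mul_comp_natCast_mul (κ : ℝ → ℂ) (hf₀ : f 0 = 0) (s : ℂ) (n : ℕ) :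
    ∫ t in Ioi (0 : ℝ), ‖(t : ℂ) ^ (s - 1) • (f n * κ (n * t))‖ =
      ‖LSeries.term f s n‖ * ∫ t in Ioi (0 : ℝ), ‖(t : ℂ) ^ (s - 1) • κ t‖ := by
  rcases n.eq_zero_or_pos with rfl | hn
  · simp [hf₀]
  have hn₀ : (0 : ℝ) < n := Nat.cast_pos.2 hn
  have hterm : ∀ t ∈ Ioi (0 : ℝ), ‖(t : ℂ) ^ (s - 1) • (f n * κ (n * t))‖ =
      ‖LSeries.term f s n‖ * (n * ‖((n * t : ℝ) : ℂ) ^ (s - 1) • κ (n * t)‖) := fun t ht ↦ by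
    rw [LSeries.norm_term_eq, if_neg hn.ne', norm_smul, norm_smul, norm_mul,
      norm_cpow_eq_rpow_re_of_pos ht, norm_cpow_eq_rpow_re_of_pos (mul_pos hn₀ ht),
      Real.mul_rpow hn₀.le (le_of_lt ht), sub_re, one_re, Real.rpow_sub_one hn₀.ne']
    field_simp
  rw [setIntegral_congr_fun measurableSet_Ioi hterm, integral_const_mul, integral_const_mul,
    integral_comp_mul_left_Ioi (fun t ↦ ‖(t : ℂ) ^ (s - 1) • κ t‖) 0 hn₀, mul_zero, smul_eq_mul,
    mul_inv_cancel_left₀ hn₀.ne']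

lemma mellin_tsum_mul_comp_natCast_mul (hκ : MellinConvergent κ s) (hf₀ : f 0 = 0)
    (hf : LSeriesSummable f s) :
    mellin (fun t ↦ ∑' n, f n * κ (n * t)) s = LSeries f s * mellin κ s := by
  have hint (n : ℕ) : MellinConvergent (fun t ↦ f n * κ (n * t)) s := by
    rcases n.eq_zero_or_pos with rfl | hn
    · simp [hf₀, MellinConvergent]
    · exact ((MellinConvergent.comp_mul_left (Nat.cast_pos.2 hn)).2 hκ).const_smul (f n)
  have hsum := hasSum_integral_of_summable_integral_norm hint (by
    simpa only [integral_norm_mul_comp_natCast_mul κ hf₀ s] using hf.norm.mul_right _)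
  calc mellin (fun t ↦ ∑' n, f n * κ (n * t)) s
      = ∫ t in Ioi (0 : ℝ), ∑' n, (t : ℂ) ^ (s - 1) • (f n * κ (n * t)) := by
        simp only [mellin, smul_eq_mul, tsum_mul_left]
    _ = ∑' n, mellin (fun t ↦ f n * κ (n * t)) s := hsum.tsum_eq.symm
    _ = LSeries f s * mellin κ s := by
        simp only [mellin_mul_comp_natCast_mul κ hf₀, tsum_mul_right, LSeries]

end

lemma hasMellin_one_sub_Ioc {s : ℂ} (hs : 0 < s.re) :
    HasMellin (indicator (Ioc 0 1) fun t : ℝ ↦ 1 - (t : ℂ)) s (1 / (s * (s + 1))) := by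
  have hs₀ : s ≠ 0 := fun h ↦ by simp [h] at hs
  have hs₁ : s + 1 ≠ 0 := fun h ↦ by norm_num [eq_neg_of_add_eq_zero_left h] at hs
  have hone := hasMellin_one_Ioc hs
  have hid := hasMellin_cpow_Ioc 1 (show 0 < s.re + (1 : ℂ).re by rw [one_re]; linarith)
  have hsub := hasMellin_sub hone.1 hid.1
  have hval : 1 / s - 1 / (s + 1) = 1 / (s * (s + 1)) := by
    field_simp
    ring
  rw [hone.2, hid.2, hval] at hsub
  simpa only [cpow_one, ← indicator_sub] using hsub

/-- `∫ u in 1..x, (1 - u / x)` for `x ≥ 1`, and `0` for `x ≤ 1`: the first Riesz mean of Lebesgue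
measure on `[1, ∞)`. It is the main term contributed by a simple pole at `s = 1`. -/
noncomputable def rieszMainTerm (x : ℝ) : ℝ :=
  max (x - 1) 0 ^ 2 / (2 * x)

lemma mellin_rieszMainTerm {s : ℂ} (hs : 1 < s.re) :
    mellin (fun t ↦ (rieszMainTerm t : ℂ)) (-s) = 1 / ((s - 1) * (s * (s + 1))) := by
  have hs₀ : s ≠ 0 := fun h ↦ by norm_num [h] at hs
  have hs₁ : s - 1 ≠ 0 := fun h ↦ by norm_num [sub_eq_zero.1 h] at hs
  have hs₂ : s + 1 ≠ 0 := fun h ↦ by norm_num [eq_neg_of_add_eq_zero_left h] at hs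
  set φ : ℝ → ℂ := indicator (Ioc 0 1) fun t : ℝ ↦ 1 - (t : ℂ) with hφ
  have hright : HasMellin φ s _ := hasMellin_one_sub_Ioc (by linarith)
  have hleft : HasMellin φ (s + -1) _ := hasMellin_one_sub_Ioc (by simpa using hs)
  have hcongr : ∀ t ∈ Ioi (0 : ℝ), (rieszMainTerm t⁻¹ : ℂ) =
      (2 : ℂ)⁻¹ • ((t : ℂ) ^ (-1 : ℂ) • φ t - φ t) := fun t ht ↦ by
    have ht₀ : (t : ℂ) ≠ 0 := ofReal_ne_zero.2 (ne_of_gt ht)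
    by_cases ht₁ : t ≤ 1
    · rw [rieszMainTerm, max_eq_left (sub_nonneg.2 ((one_le_inv₀ ht).2 ht₁)), hφ,
        indicator_of_mem (mem_Ioc.2 ⟨ht, ht₁⟩), cpow_neg_one]
      push_cast
      simp only [smul_eq_mul]
      field_simp
    · rw [rieszMainTerm, max_eq_right (sub_nonpos.2 (inv_le_one_of_one_le₀ (le_of_not_ge ht₁))), hφ,
        indicator_of_notMem fun h ↦ ht₁ h.2]
      simp
  calc mellin (fun t ↦ (rieszMainTerm t : ℂ)) (-s)
      = mellin (fun t ↦ (2 : ℂ)⁻¹ • ((t : ℂ) ^ (-1 : ℂ) • φ t - φ t)) s := by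
        rw [← mellin_comp_inv]
        exact setIntegral_congr_fun measurableSet_Ioi fun t ht ↦
          congrArg ((t : ℂ) ^ (s - 1) • ·) (hcongr t ht)
    _ = (2 : ℂ)⁻¹ • (mellin φ (s - 1) - mellin φ s) := by
        rw [mellin_const_smul, (hasMellin_sub (MellinConvergent.cpow_smul.2 hleft.1) hright.1).2,
          mellin_cpow_smul, ← sub_eq_add_neg]
    _ = 1 / ((s - 1) * (s * (s + 1))) := by
        rw [sub_eq_add_neg s, hleft.2, hright.2, neg_add_cancel_right, ← sub_eq_add_neg,
          smul_eq_mul]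
        field_simp
        ring

/-- The first Riesz (Cesàro) mean `∑ n < x, f n * (1 - n / x)` of a sequence. It is continuous in
`x`, unlike the summatory function, so Mellin inversion recovers it from the Dirichlet series. -/
noncomputable def rieszMean (f : ℕ → ℂ) (x : ℝ) : ℂ :=
  ∑ n ∈ Finset.range ⌈x⌉₊, f n * (1 - n / x)

section

variable {f : ℕ → ℂ} {x : ℝ}

lemma rieszMean_eq_sum_max (f : ℕ → ℂ) {N : ℕ} (hx : 0 < x) (hN : x ≤ N) :
    rieszMean f x = ∑ n ∈ Finset.range N, f n * ((max (1 - n / x) 0 : ℝ) : ℂ) := by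
  rw [rieszMean, ← Finset.sum_subset (Finset.range_mono (Nat.ceil_le.2 hN)) fun n _ hn ↦ ?_]
  · refine Finset.sum_congr rfl fun n hn ↦ ?_
    have hnx : (n : ℝ) < x := Nat.lt_ceil.1 (Finset.mem_range.1 hn)
    rw [max_eq_left (sub_nonneg.2 ((div_le_one hx).2 hnx.le))]
    push_cast
    rfl
  · have hxn : x ≤ n := Nat.ceil_le.1 (not_lt.1 fun h ↦ hn (Finset.mem_range.2 h))
    rw [max_eq_right (sub_nonpos.2 ((one_le_div hx).2 hxn)), ofReal_zero, mul_zero]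

lemma continuousOn_rieszMean (f : ℕ → ℂ) : ContinuousOn (rieszMean f) (Ioi 0) := fun x hx ↦ by
  have hcont : ContinuousAt (fun y : ℝ ↦ ∑ n ∈ Finset.range ⌈x + 1⌉₊,
      f n * ((max (1 - n / y) 0 : ℝ) : ℂ)) x := by
    have hx₀ : x ≠ 0 := ne_of_gt hx
    fun_prop (disch := assumption)
  refine (hcont.congr ?_).continuousWithinAt
  filter_upwards [Ioo_mem_nhds hx (lt_add_one x)] with y hy
  exact (rieszMean_eq_sum_max f hy.1 (hy.2.le.trans (Nat.le_ceil _))).symm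

lemma rieszMean_of_le_one (hf₀ : f 0 = 0) (hx : x ≤ 1) : rieszMean f x = 0 := by
  refine Finset.sum_eq_zero fun n hn ↦ ?_
  have hn₁ : n < 1 := (Finset.mem_range.1 hn).trans_le (Nat.ceil_le.2 (by simpa))
  rw [Nat.lt_one_iff.1 hn₁, hf₀, zero_mul]

lemma rieszMean_inv_eq_tsum (hf₀ : f 0 = 0) (hx : 0 < x) :
    rieszMean f x⁻¹ = ∑' n : ℕ, f n * indicator (Ioc 0 1) (fun t : ℝ ↦ 1 - (t : ℂ)) (n * x) := by
  rw [tsum_eq_sum (s := Finset.range ⌈x⁻¹⌉₊) fun n hn ↦ ?_]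
  · refine Finset.sum_congr rfl fun n hn ↦ ?_
    rcases n.eq_zero_or_pos with rfl | hn₀
    · simp [hf₀]
    have hnx : (n : ℝ) < x⁻¹ := Nat.lt_ceil.1 (Finset.mem_range.1 hn)
    have hmem : n * x ∈ Ioc 0 1 := ⟨by positivity, by
      simpa [hx.ne'] using mul_le_mul_of_nonneg_right hnx.le hx.le⟩
    rw [indicator_of_mem hmem]
    simp
  · have hxn : x⁻¹ ≤ n := Nat.ceil_le.1 (not_lt.1 fun h ↦ hn (Finset.mem_range.2 h))
    by_cases hmem : n * x ∈ Ioc 0 1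
    · have hone : 1 = n * x :=
        le_antisymm (by simpa [hx.ne'] using mul_le_mul_of_nonneg_right hxn hx.le) hmem.2
      rw [indicator_of_mem hmem, ← hone]
      simp
    · rw [indicator_of_notMem hmem, mul_zero]

lemma norm_rieszMean_le (hf₀ : f 0 = 0) {c : ℝ} (hc : 0 ≤ c) (hf : LSeriesSummable f c)
    (hx : 0 < x) : ‖rieszMean f x‖ ≤ (∑' n, ‖LSeries.term f c n‖) * x ^ c := by
  refine le_trans ?_ (mul_le_mul_of_nonneg_right
    (hf.norm.sum_le_tsum (Finset.range ⌈x⌉₊) fun _ _ ↦ norm_nonneg _) (by positivity))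
  rw [Finset.sum_mul]
  refine norm_sum_le_of_le _ fun n hn ↦ ?_
  rcases n.eq_zero_or_pos with rfl | hn₀
  · simp [hf₀]
  have hnx : (n : ℝ) < x := Nat.lt_ceil.1 (Finset.mem_range.1 hn)
  have hweight : ‖(1 - n / x : ℂ)‖ ≤ 1 := by
    have hdiv : (n : ℝ) / x ≤ 1 := (div_le_one hx).2 hnx.le
    have hdiv₀ : 0 ≤ (n : ℝ) / x := by positivity
    have hcast : (1 - n / x : ℂ) = ((1 - n / x : ℝ) : ℂ) := by push_cast; rfl
    rw [hcast, norm_real, Real.norm_of_nonneg (by linarith)]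
    linarith
  calc ‖f n * (1 - n / x)‖ ≤ ‖f n‖ := by
        rw [norm_mul]
        exact mul_le_of_le_one_right (norm_nonneg _) hweight
    _ = ‖LSeries.term f c n‖ * (n : ℝ) ^ c := by
        rw [LSeries.norm_term_eq, if_neg hn₀.ne', ofReal_re]
        field_simp
    _ ≤ ‖LSeries.term f c n‖ * x ^ c := by gcongr

end

section

variable {f : ℕ → ℂ} {s : ℂ}

lemma mellin_rieszMean_neg (hf₀ : f 0 = 0) (hs : 0 < s.re) (hf : LSeriesSummable f s) :
    mellin (rieszMean f) (-s) = LSeries f s / (s * (s + 1)) := by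
  have hκ := hasMellin_one_sub_Ioc hs
  rw [← mellin_comp_inv, div_eq_mul_one_div, ← hκ.2,
    ← mellin_tsum_mul_comp_natCast_mul hκ.1 hf₀ hf]
  exact setIntegral_congr_fun measurableSet_Ioi fun t ht ↦
    congrArg ((t : ℂ) ^ (s - 1) • ·) (rieszMean_inv_eq_tsum hf₀ ht)

end

lemma rieszMainTerm_of_le_one {x : ℝ} (hx : x ≤ 1) : rieszMainTerm x = 0 := by
  rw [rieszMainTerm, max_eq_right (sub_nonpos.2 hx), zero_pow two_ne_zero, zero_div]

lemma continuousOn_ofReal_rieszMainTerm :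
    ContinuousOn (fun x ↦ (rieszMainTerm x : ℂ)) (Ioi 0) := fun x hx ↦ by
  have hx₀ : 2 * x ≠ 0 := mul_ne_zero two_ne_zero (ne_of_gt hx)
  unfold rieszMainTerm
  fun_prop (disch := assumption)

lemma isBigO_rieszMainTerm {c : ℝ} (hc : 1 < c) : rieszMainTerm =O[atTop] fun x ↦ x ^ c := by
  refine .of_bound 1 ?_
  filter_upwards [eventually_ge_atTop 1] with x hx
  have hx₀ : 0 < x := by linarith
  have hle : rieszMainTerm x ≤ x := by
    rw [rieszMainTerm, max_eq_left (by linarith), div_le_iff₀ (by positivity)]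
    nlinarith
  rw [one_mul, Real.norm_of_nonneg (by rw [rieszMainTerm]; positivity),
    Real.norm_of_nonneg (Real.rpow_nonneg hx₀.le c)]
  exact hle.trans (Real.self_le_rpow_of_one_le hx hc.le)

section

variable {f : ℕ → ℂ} {A : ℂ} {G : ℂ → ℂ}

lemma isBigO_rieszMean (hf₀ : f 0 = 0) (hf : LSeries.abscissaOfAbsConv f ≤ 1) {c : ℝ}
    (hc : 1 < c) : rieszMean f =O[atTop] fun x ↦ x ^ c := by
  have hsum : LSeriesSummable f c :=
    LSeriesSummable_of_abscissaOfAbsConv_lt_re (hf.trans_lt (by exact_mod_cast hc))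
  refine .of_bound (∑' n, ‖LSeries.term f c n‖) ?_
  filter_upwards [eventually_gt_atTop 0] with x hx
  rw [Real.norm_of_nonneg (by positivity)]
  exact norm_rieszMean_le hf₀ (by linarith) hsum hx

lemma mellin_rieszMean_sub_neg (hf₀ : f 0 = 0) (hf : LSeries.abscissaOfAbsConv f ≤ 1)
    {s : ℂ} (hs : 1 < s.re) :
    mellin (fun x ↦ rieszMean f x - A * rieszMainTerm x) (-s) =
      (LSeries f s - A / (s - 1)) / (s * (s + 1)) := by
  have hsum : LSeriesSummable f s :=
    LSeriesSummable_of_abscissaOfAbsConv_lt_re (hf.trans_lt (by exact_mod_cast hs))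
  have hmean : MellinConvergent (rieszMean f) (-s) :=
    mellinConvergent_neg_of_forall_gt (continuousOn_rieszMean f)
      (fun c hc ↦ isBigO_rieszMean hf₀ hf hc) (fun t ht ↦ rieszMean_of_le_one hf₀ ht) hs
  have hmain : MellinConvergent (fun x ↦ (rieszMainTerm x : ℂ)) (-s) :=
    mellinConvergent_neg_of_forall_gt continuousOn_ofReal_rieszMainTerm
      (fun c hc ↦ isBigO_ofReal_left.2 (isBigO_rieszMainTerm hc))
      (fun t ht ↦ by simp [rieszMainTerm_of_le_one ht]) hs
  have hsub := (hasMellin_sub hmean (hmain.const_smul A)).2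
  simp only [smul_eq_mul] at hsub
  have hsmul := mellin_const_smul (fun x ↦ (rieszMainTerm x : ℂ)) (-s) A
  simp only [smul_eq_mul] at hsmul
  rw [hsub, hsmul, mellin_rieszMean_neg hf₀ (by linarith) hsum, mellin_rieszMainTerm hs, sub_div,
    div_div, mul_one_div]

lemma exists_norm_log_pow_smul_rieszMean_sub_le (hf₀ : f 0 = 0)
    (hf : LSeries.abscissaOfAbsConv f ≤ 1) (hG : HasSubpolynomialGrowth G)
    (hL : ∀ s : ℂ, 1 < s.re → LSeries f s = A / (s - 1) + G s) (k : ℕ) :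
    ∃ K, ∀ x : ℝ, 0 < x →
      ‖Real.log x ^ k • (rieszMean f x - A * rieszMainTerm x)‖ ≤ K * x := by
  obtain ⟨C, hC⟩ := hG.exists_norm_iteratedDeriv_div_le k
  have hw : Integrable fun y : ℝ ↦ C * (1 + |y|) ^ (-(3 / 2) : ℝ) :=
    (integrable_one_add_norm (by norm_num)).const_mul C
  have h := exists_norm_log_pow_smul_le (g := fun x ↦ rieszMean f x - A * rieszMainTerm x)
    (b := 1) (H := fun z ↦ G z / (z * (z + 1)))
    ((continuousOn_rieszMean f).sub
      (continuousOn_ofReal_rieszMainTerm.const_mul A))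
    (fun c hc ↦ (isBigO_rieszMean hf₀ hf hc).sub
      (.const_mul_left (isBigO_ofReal_left.2 (isBigO_rieszMainTerm hc)) A))
    (fun t ht ↦ by simp [rieszMean_of_le_one hf₀ ht, rieszMainTerm_of_le_one ht])
    (fun s hs ↦ by rw [mellin_rieszMean_sub_neg hf₀ hf hs, hL s hs, add_sub_cancel_left])
    k (one_half_pos (α := ℝ)) hw fun s hs hs' ↦ hC s hs.le (by linarith)
  simpa only [Real.rpow_one] using h

end

/-! ### A Tauberian theorem with remainder -/

/-- The summatory function `∑ n < x, f n`, with the strict inequality of `primeSumBelowMod`. -/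
noncomputable def sumBelow (f : ℕ → ℝ) (x : ℝ) : ℝ :=
  ∑ n ∈ Finset.range ⌈x⌉₊, f n

/-- The integral `∑ n < x, f n * (x - n)` of `sumBelow f` over `(-∞, x]`, whose increments control
`sumBelow f` when `f` is nonnegative. -/
noncomputable def integratedSumBelow (f : ℕ → ℝ) (x : ℝ) : ℝ :=
  ∑ n ∈ Finset.range ⌈x⌉₊, f n * (x - n)

section

variable {f : ℕ → ℝ} {x : ℝ}

lemma integratedSumBelow_eq (f : ℕ → ℝ) (x : ℝ) :
    integratedSumBelow f x = x * sumBelow f x - sumBelow (fun n ↦ n * f n) x := by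
  rw [integratedSumBelow, sumBelow, sumBelow, Finset.mul_sum, ← Finset.sum_sub_distrib]
  exact Finset.sum_congr rfl fun n _ ↦ by ring

lemma ofReal_integratedSumBelow (f : ℕ → ℝ) (hx : x ≠ 0) :
    (integratedSumBelow f x : ℂ) = x * rieszMean (fun n ↦ f n) x := by
  rw [integratedSumBelow, rieszMean, Finset.mul_sum, ofReal_sum]
  refine Finset.sum_congr rfl fun n _ ↦ ?_
  have hx' : (x : ℂ) ≠ 0 := ofReal_ne_zero.2 hx
  push_cast
  field_simp

lemma sum_le_integratedSumBelow (hf : ∀ n, 0 ≤ f n) (s : Finset ℕ) :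
    ∑ n ∈ s, f n * (x - n) ≤ integratedSumBelow f x := by
  have hnonneg : ∀ n ∈ Finset.range ⌈x⌉₊, 0 ≤ f n * (x - n) := fun n hn ↦
    mul_nonneg (hf n) (sub_nonneg.2 (Nat.lt_ceil.1 (Finset.mem_range.1 hn)).le)
  rw [integratedSumBelow, ← Finset.sum_inter_add_sum_sdiff s (Finset.range ⌈x⌉₊),
    ← Finset.sum_inter_add_sum_sdiff (Finset.range ⌈x⌉₊) s, Finset.inter_comm]
  have hout : ∑ n ∈ s \ Finset.range ⌈x⌉₊, f n * (x - n) ≤ 0 :=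
    Finset.sum_nonpos fun n hn ↦ mul_nonpos_of_nonneg_of_nonpos (hf n) <| sub_nonpos.2 <|
      Nat.ceil_le.1 <| not_lt.1 fun h ↦ (Finset.mem_sdiff.1 hn).2 (Finset.mem_range.2 h)
  have hin : 0 ≤ ∑ n ∈ Finset.range ⌈x⌉₊ \ s, f n * (x - n) :=
    Finset.sum_nonneg fun n hn ↦ hnonneg n (Finset.mem_sdiff.1 hn).1
  linarith

lemma integratedSumBelow_add_mul_le (hf : ∀ n, 0 ≤ f n) (x h : ℝ) :
    integratedSumBelow f x + h * sumBelow f x ≤ integratedSumBelow f (x + h) := by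
  refine le_of_eq_of_le ?_ (sum_le_integratedSumBelow hf (Finset.range ⌈x⌉₊))
  rw [integratedSumBelow, sumBelow, Finset.mul_sum, ← Finset.sum_add_distrib]
  exact Finset.sum_congr rfl fun n _ ↦ by ring

end

section

variable {R U : ℝ → ℝ} {A : ℝ} {k : ℕ}

lemma sq_div_log_pow_le {x y : ℝ} (hx₀ : 0 < x) (hx : 2 ≤ Real.log x) (hy : x / 2 ≤ y)
    (hy' : y ≤ 2 * x) (k : ℕ) :
    y ^ 2 / Real.log y ^ (2 * k) ≤ 16 * 4 ^ k * (x / (2 * Real.log x ^ k)) ^ 2 := by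
  have hlog : Real.log x / 2 ≤ Real.log y := by
    have hmono := Real.log_le_log (by positivity) hy
    rw [Real.log_div hx₀.ne' two_ne_zero] at hmono
    linarith [Real.log_two_lt_d9]
  calc y ^ 2 / Real.log y ^ (2 * k) ≤ (2 * x) ^ 2 / (Real.log x / 2) ^ (2 * k) := by
        gcongr
        linarith
    _ = 16 * 4 ^ k * (x / (2 * Real.log x ^ k)) ^ 2 := by
        rw [pow_mul, div_pow, div_pow, ← pow_mul, mul_comm 2 k, pow_mul]
        field_simp
        norm_num

lemma isBigO_sub_mul_of_forall_add_mul_le (hRU : ∀ x h, R x + h * U x ≤ R (x + h))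
    (hR : (fun x ↦ R x - A / 2 * x ^ 2) =O[atTop] fun x ↦ x ^ 2 / Real.log x ^ (2 * k)) :
    (fun x ↦ U x - A * x) =O[atTop] fun x ↦ x / Real.log x ^ k := by
  obtain ⟨K, hK₀, hK⟩ := hR.exists_nonneg
  obtain ⟨x₀, hx₀⟩ := eventually_atTop.1 hK.bound
  set B := K * (16 * 4 ^ k)
  refine .of_bound ((|A| / 2 + 2 * B) / 2) ?_
  filter_upwards [eventually_ge_atTop (2 * x₀), eventually_gt_atTop 0,
    Real.tendsto_log_atTop.eventually_ge_atTop 2] with x hx hxpos hlog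
  set h := x / (2 * Real.log x ^ k)
  have hlogk : 1 ≤ Real.log x ^ k := one_le_pow₀ (by linarith)
  have hh : 0 < h := by positivity
  have hhx : h ≤ x / 2 := by
    simp only [h]
    gcongr
    linarith
  have herror (y : ℝ) (hy : x / 2 ≤ y) (hy' : y ≤ 2 * x) : |R y - A / 2 * y ^ 2| ≤ B * h ^ 2 := by
    have hbound := hx₀ y (by linarith)
    rw [Real.norm_eq_abs, Real.norm_of_nonneg (by rw [pow_mul]; positivity)] at hbound
    exact hbound.trans ((mul_le_mul_of_nonneg_left
      (sq_div_log_pow_le hxpos hlog hy hy' k) hK₀).trans_eq (by ring))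
  obtain ⟨hbelow, -⟩ := abs_le.1 (herror x (by linarith) (by linarith))
  obtain ⟨-, hadd⟩ := abs_le.1 (herror (x + h) (by linarith) (by linarith))
  obtain ⟨-, hsub⟩ := abs_le.1 (herror (x - h) (by linarith) (by linarith))
  have hupper := hRU x h
  have hlower := hRU x (-h)
  rw [← sub_eq_add_neg] at hlower
  have hA := abs_le.1 (le_refl |A|)
  have habs : |U x - A * x| * h ≤ (|A| / 2 + 2 * B) * h * h := by
    rw [← abs_of_pos hh, ← abs_mul, abs_of_pos hh, abs_le]
    constructor <;> nlinarith [sq_nonneg h]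
  rw [Real.norm_eq_abs, Real.norm_of_nonneg (by positivity)]
  refine (le_of_mul_le_mul_right habs hh).trans_eq ?_
  simp only [h]
  field_simp

end

section

variable {f : ℕ → ℝ} {A : ℝ} {G : ℂ → ℂ}

lemma isBigO_id_sq_div_log_pow (k : ℕ) :
    (fun x : ℝ ↦ x) =O[atTop] fun x ↦ x ^ 2 / Real.log x ^ k := by
  refine .of_bound 1 ?_
  filter_upwards [(Real.isLittleO_pow_log_id_atTop (n := k)).bound one_pos, eventually_gt_atTop 1]
    with x hx hx₁
  have hx₀ : 0 < x := by linarith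
  have hlog : 0 < Real.log x ^ k := pow_pos (Real.log_pos hx₁) k
  simp only [id_eq, one_mul, Real.norm_of_nonneg hlog.le, Real.norm_of_nonneg hx₀.le] at hx
  rw [one_mul, Real.norm_of_nonneg hx₀.le, Real.norm_of_nonneg (by positivity), le_div_iff₀ hlog,
    sq]
  gcongr

lemma abs_integratedSumBelow_sub_le {K : ℝ} {k : ℕ} {x : ℝ} (hx : 1 < x)
    (hK : ‖Real.log x ^ k • (rieszMean (fun n ↦ f n) x - A * rieszMainTerm x)‖ ≤ K * x) :
    |integratedSumBelow f x - A / 2 * (x - 1) ^ 2| ≤ K * (x ^ 2 / Real.log x ^ k) := by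
  have hx₀ : 0 < x := by linarith
  have hlog : 0 < Real.log x ^ k := pow_pos (Real.log_pos hx) k
  have hcast : ((integratedSumBelow f x - A / 2 * (x - 1) ^ 2 : ℝ) : ℂ) =
      x * (rieszMean (fun n ↦ f n) x - A * rieszMainTerm x) := by
    have hx' : (x : ℂ) ≠ 0 := ofReal_ne_zero.2 hx₀.ne'
    rw [ofReal_sub, ofReal_integratedSumBelow f hx₀.ne', rieszMainTerm, max_eq_left (by linarith)]
    push_cast
    field_simp
  rw [norm_smul, Real.norm_of_nonneg hlog.le] at hK
  rw [← Real.norm_eq_abs, ← norm_real, hcast, norm_mul, norm_real, Real.norm_of_nonneg hx₀.le,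
    ← mul_div_assoc, le_div_iff₀ hlog]
  nlinarith

lemma isBigO_integratedSumBelow_sub (hf₀ : f 0 = 0)
    (hsum : LSeries.abscissaOfAbsConv (fun n ↦ f n) ≤ 1) (hG : HasSubpolynomialGrowth G)
    (hL : ∀ s : ℂ, 1 < s.re → LSeries (fun n ↦ f n) s = A / (s - 1) + G s) (k : ℕ) :
    (fun x ↦ integratedSumBelow f x - A / 2 * x ^ 2) =O[atTop]
      fun x ↦ x ^ 2 / Real.log x ^ k := by
  obtain ⟨K, hK⟩ := exists_norm_log_pow_smul_rieszMean_sub_le (by simpa) hsum hG hL k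
  have hmain : (fun x ↦ integratedSumBelow f x - A / 2 * (x - 1) ^ 2) =O[atTop]
      fun x ↦ x ^ 2 / Real.log x ^ k := by
    refine .of_bound K ?_
    filter_upwards [eventually_gt_atTop 1] with x hx
    have hlog : 0 ≤ Real.log x := Real.log_nonneg hx.le
    rw [Real.norm_eq_abs, Real.norm_of_nonneg (by positivity)]
    exact abs_integratedSumBelow_sub_le hx (hK x (by linarith))
  have hshift : (fun x : ℝ ↦ A / 2 * (x - 1) ^ 2 - A / 2 * x ^ 2) =O[atTop] fun x : ℝ ↦ x := by
    refine .of_bound |A| ?_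
    filter_upwards [eventually_ge_atTop 1] with x hx
    have heq : A / 2 * (x - 1) ^ 2 - A / 2 * x ^ 2 = A * (1 / 2 - x) := by ring
    rw [heq, norm_mul, Real.norm_eq_abs, Real.norm_eq_abs]
    gcongr
    rw [abs_of_nonpos (by linarith), Real.norm_of_nonneg (by linarith)]
    linarith
  simpa using hmain.add (hshift.trans (isBigO_id_sq_div_log_pow k))

theorem isBigO_sumBelow_sub (hf : ∀ n, 0 ≤ f n) (hf₀ : f 0 = 0)
    (hsum : LSeries.abscissaOfAbsConv (fun n ↦ f n) ≤ 1) (hG : HasSubpolynomialGrowth G)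
    (hL : ∀ s : ℂ, 1 < s.re → LSeries (fun n ↦ f n) s = A / (s - 1) + G s) (k : ℕ) :
    (fun x ↦ sumBelow f x - A * x) =O[atTop] fun x ↦ x / Real.log x ^ k :=
  isBigO_sub_mul_of_forall_add_mul_le (integratedSumBelow_add_mul_le hf)
    (isBigO_integratedSumBelow_sub hf₀ hsum hG hL (2 * k))

theorem isBigO_sumBelow_natCast_mul_sub (hf : ∀ n, 0 ≤ f n) (hf₀ : f 0 = 0)
    (hsum : LSeries.abscissaOfAbsConv (fun n ↦ f n) ≤ 1) (hG : HasSubpolynomialGrowth G)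
    (hL : ∀ s : ℂ, 1 < s.re → LSeries (fun n ↦ f n) s = A / (s - 1) + G s) (k : ℕ) :
    (fun x ↦ sumBelow (fun n ↦ n * f n) x - A / 2 * x ^ 2) =O[atTop]
      fun x ↦ x ^ 2 / Real.log x ^ k := by
  have hmul := (Asymptotics.isBigO_refl (fun x : ℝ ↦ x) atTop).mul
    (isBigO_sumBelow_sub hf hf₀ hsum hG hL k)
  have hdiff := (hmul.congr_right fun x ↦ by rw [sq, mul_div_assoc]).sub
    (isBigO_integratedSumBelow_sub hf₀ hsum hG hL k)
  refine hdiff.congr_left fun x ↦ ?_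
  rw [integratedSumBelow_eq]
  ring

end

/-! ### Removing the weight `log n` -/

section

variable {w : ℕ → ℝ} {A x y : ℝ}

lemma sumBelow_mul_log_add_le (hw : ∀ n, 0 ≤ w n) (hw₀ : w 0 = 0) (hyx : y ≤ x) :
    sumBelow (fun n ↦ w n * Real.log n) x + (Real.log x - Real.log y) * sumBelow w y ≤
      sumBelow w x * Real.log x := by
  have hmono {z : ℝ} {n : ℕ} (hn : n ∈ Finset.range ⌈z⌉₊) :
      w n * Real.log n ≤ w n * Real.log z := by
    rcases n.eq_zero_or_pos with rfl | hn₀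
    · simp [hw₀]
    have hnz : (n : ℝ) < z := Nat.lt_ceil.1 (Finset.mem_range.1 hn)
    exact mul_le_mul_of_nonneg_left (Real.log_le_log (by positivity) hnz.le) (hw n)
  have hdeficit : (Real.log x - Real.log y) * sumBelow w y ≤
      ∑ n ∈ Finset.range ⌈x⌉₊, (w n * Real.log x - w n * Real.log n) := by
    rw [sumBelow, Finset.mul_sum]
    refine (Finset.sum_le_sum fun n hn ↦ ?_).trans (Finset.sum_le_sum_of_subset_of_nonneg
      (Finset.range_mono (Nat.ceil_mono hyx)) fun n hn _ ↦ sub_nonneg.2 (hmono hn))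
    linarith [hmono hn]
  rw [Finset.sum_sub_distrib, ← Finset.sum_mul] at hdeficit
  simp only [sumBelow] at hdeficit ⊢
  linarith

lemma sumBelow_mul_log_le (hw : ∀ n, 0 ≤ w n) (hw₀ : w 0 = 0) :
    sumBelow (fun n ↦ w n * Real.log n) x ≤ sumBelow w x * Real.log x := by
  simpa using sumBelow_mul_log_add_le hw hw₀ (le_refl x)

lemma sumBelow_le_of_le_natCast (hw : ∀ n, 0 ≤ w n) (hwn : ∀ n, w n ≤ n) (hx : 1 < x) :
    sumBelow w x ≤ 2 * x * x ^ (2 / 3 : ℝ) +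
      3 / 2 * sumBelow (fun n ↦ w n * Real.log n) x / Real.log x := by
  have hlog : 0 < Real.log x := Real.log_pos hx
  have hterm (n : ℕ) :
      w n ≤ x ^ (2 / 3 : ℝ) + 3 / 2 * (w n * Real.log n) / Real.log x := by
    rcases le_total (n : ℝ) (x ^ (2 / 3 : ℝ)) with hn | hn
    · have hnonneg : 0 ≤ 3 / 2 * (w n * Real.log n) / Real.log x := by
        have := hw n
        positivity [Real.log_natCast_nonneg n]
      linarith [hwn n]
    · have hlogn : 2 / 3 * Real.log x ≤ Real.log n := by
        rw [← Real.log_rpow (by linarith)]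
        exact Real.log_le_log (by positivity) hn
      have hle : w n ≤ 3 / 2 * (w n * Real.log n) / Real.log x := by
        rw [le_div_iff₀ hlog]
        nlinarith [hw n]
      exact hle.trans (le_add_of_nonneg_left (by positivity))
  have hcard : (⌈x⌉₊ : ℝ) ≤ 2 * x := by linarith [Nat.ceil_lt_add_one (show 0 ≤ x by linarith)]
  calc sumBelow w x
      ≤ ∑ n ∈ Finset.range ⌈x⌉₊, (x ^ (2 / 3 : ℝ) + 3 / 2 * (w n * Real.log n) / Real.log x) :=
        Finset.sum_le_sum fun n _ ↦ hterm n
    _ = ⌈x⌉₊ * x ^ (2 / 3 : ℝ) + 3 / 2 * sumBelow (fun n ↦ w n * Real.log n) x / Real.log x := by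
        rw [Finset.sum_add_distrib, ← Finset.sum_div, ← Finset.mul_sum, sumBelow]
        simp
    _ ≤ _ := by gcongr

lemma eventually_abs_sumBelow_sub_le {u : ℕ → ℝ} (hA : 0 < A)
    (hu : (fun x ↦ sumBelow u x - A / 2 * x ^ 2) =o[atTop] fun x ↦ x ^ 2 / Real.log x) :
    ∀ᶠ x : ℝ in atTop, |sumBelow u x - A / 2 * x ^ 2| ≤ A / 32 * (x ^ 2 / Real.log x) := by
  filter_upwards [hu.bound (show 0 < A / 32 by positivity), eventually_gt_atTop 1] with x hx hx₁
  have hlog : 0 < Real.log x := Real.log_pos hx₁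
  rwa [Real.norm_eq_abs, Real.norm_of_nonneg (by positivity)] at hx

-- Bounding `log n` by `log x` throughout gives this only up to an error `o(x ^ 2 / log x ^ 2)`. The
-- terms with `n < x / 2` absorb the error, as for them `log n` falls short of `log x` by `log 2`.
lemma eventually_le_sumBelow (hw : ∀ n, 0 ≤ w n) (hA : 0 < A)
    (hQ : (fun x ↦ sumBelow (fun n ↦ w n * Real.log n) x - A / 2 * x ^ 2) =o[atTop]
      fun x ↦ x ^ 2 / Real.log x) (hw₀ : w 0 = 0) :
    ∀ᶠ x : ℝ in atTop, A / 2 * x ^ 2 / Real.log x ≤ sumBelow w x := by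
  have herr := eventually_abs_sumBelow_sub_le hA hQ
  have hhalf : Tendsto (fun x : ℝ ↦ x / 2) atTop atTop := tendsto_id.atTop_div_const two_pos
  filter_upwards [herr, hhalf.eventually herr, eventually_gt_atTop 0,
    (Real.tendsto_log_atTop.comp hhalf).eventually_ge_atTop 1] with x hx hx₂ hx₀ hlog₂
  set Q := sumBelow fun n ↦ w n * Real.log n
  have hlog2 := Real.log_two_gt_d9
  have hlogdiv : Real.log (x / 2) = Real.log x - Real.log 2 := Real.log_div hx₀.ne' two_ne_zero
  simp only [Function.comp_apply] at hlog₂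
  have hlog : 0 < Real.log x := by linarith
  have hQx : A / 2 * x ^ 2 - A / 32 * (x ^ 2 / Real.log x) ≤ Q x := by linarith [(abs_le.1 hx).1]
  have hQhalf : A * x ^ 2 / 16 ≤ Q (x / 2) := by
    have hdiv : A / 32 * ((x / 2) ^ 2 / Real.log (x / 2)) ≤ A / 32 * (x / 2) ^ 2 := by
      gcongr
      exact div_le_self (by positivity) hlog₂
    nlinarith [(abs_le.1 hx₂).1]
  have hhalfsum : Q (x / 2) ≤ sumBelow w (x / 2) * Real.log x :=
    (sumBelow_mul_log_le hw hw₀).trans <|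
      mul_le_mul_of_nonneg_left (by linarith) (Finset.sum_nonneg fun n _ ↦ hw n)
  have hsum : Q x + Real.log 2 * sumBelow w (x / 2) ≤ sumBelow w x * Real.log x := by
    simpa [hlogdiv] using sumBelow_mul_log_add_le hw hw₀ (half_le_self hx₀.le)
  have hdominate : A / 32 * (x ^ 2 / Real.log x) ≤ Real.log 2 * sumBelow w (x / 2) := by
    rw [← mul_div_assoc, div_le_iff₀ hlog]
    calc A / 32 * x ^ 2 ≤ Real.log 2 * (A * x ^ 2 / 16) := by
          nlinarith [show 0 ≤ A * x ^ 2 by positivity]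
      _ ≤ Real.log 2 * sumBelow w (x / 2) * Real.log x := by
          rw [mul_assoc]
          gcongr
          exact hQhalf.trans hhalfsum
  rw [div_le_iff₀ hlog]
  linarith

lemma eventually_sumBelow_le (hw : ∀ n, 0 ≤ w n) (hA : 0 < A)
    (hQ : (fun x ↦ sumBelow (fun n ↦ w n * Real.log n) x - A / 2 * x ^ 2) =o[atTop]
      fun x ↦ x ^ 2 / Real.log x) (hwn : ∀ n, w n ≤ n) :
    ∀ᶠ x : ℝ in atTop, sumBelow w x ≤ A * x ^ 2 / Real.log x := by
  have hrpow := (isLittleO_log_rpow_atTop (show (0 : ℝ) < 1 / 3 by norm_num)).bound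
    (show 0 < A / 16 by positivity)
  filter_upwards [eventually_abs_sumBelow_sub_le hA hQ, hrpow, eventually_gt_atTop 1,
    Real.tendsto_log_atTop.eventually_ge_atTop 1] with x hx hlogx hx₁ hlog
  have hx₀ : 0 < x := by linarith
  set Q := sumBelow fun n ↦ w n * Real.log n
  have hQx : Q x ≤ A / 2 * x ^ 2 + A / 32 * x ^ 2 := by
    have hdiv : A / 32 * (x ^ 2 / Real.log x) ≤ A / 32 * x ^ 2 := by
      gcongr
      exact div_le_self (by positivity) hlog
    linarith [(abs_le.1 hx).2]
  rw [Real.norm_of_nonneg (by linarith), Real.norm_of_nonneg (by positivity)] at hlogx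
  have hsmall : 2 * x * x ^ (2 / 3 : ℝ) * Real.log x ≤ A / 8 * x ^ 2 := by
    calc 2 * x * x ^ (2 / 3 : ℝ) * Real.log x
        ≤ 2 * x * x ^ (2 / 3 : ℝ) * (A / 16 * x ^ (1 / 3 : ℝ)) := by gcongr
      _ = A / 8 * x * (x ^ (2 / 3 : ℝ) * x ^ (1 / 3 : ℝ)) := by ring
      _ = A / 8 * x ^ 2 := by
        rw [← Real.rpow_add hx₀]
        norm_num
        ring
  refine (sumBelow_le_of_le_natCast hw hwn hx₁).trans ?_
  rw [le_div_iff₀ (by linarith), add_mul, div_mul_cancel₀ _ (by linarith)]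
  nlinarith [show 0 ≤ A * x ^ 2 by positivity]

end

/-! ### Primes in a residue class -/

lemma isLittleO_mul_sqrt_sq_div_log :
    (fun x : ℝ ↦ x * √x) =o[atTop] fun x ↦ x ^ 2 / Real.log x := by
  have hmul := (isLittleO_log_rpow_atTop (one_half_pos (α := ℝ))).mul_isBigO
    (Asymptotics.isBigO_refl (fun x : ℝ ↦ x * √x / Real.log x) atTop)
  refine hmul.congr' ?_ ?_
  · filter_upwards [eventually_gt_atTop 1] with x hx
    exact mul_div_cancel₀ _ (Real.log_pos hx).ne'
  · filter_upwards [eventually_ge_atTop 0] with x hx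
    rw [← Real.sqrt_eq_rpow, ← mul_div_assoc, mul_left_comm, Real.mul_self_sqrt hx, sq]

section

variable {q : ℕ}

/-- `n` if `n` is a prime in the residue class `a`, and `0` otherwise: the summand of
`primeSumBelowMod` as a function on `ℕ`. -/
noncomputable def primeWeight (a : ZMod q) : ℕ → ℝ :=
  {p : ℕ | p.Prime ∧ (p : ZMod q) = a}.indicator Nat.cast

lemma primeWeight_nonneg (a : ZMod q) (n : ℕ) : 0 ≤ primeWeight a n :=
  indicator_nonneg (fun p _ ↦ p.cast_nonneg) n

lemma primeWeight_le (a : ZMod q) (n : ℕ) : primeWeight a n ≤ n :=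
  indicator_le_self' (fun p _ ↦ p.cast_nonneg) n

lemma primeWeight_zero (a : ZMod q) : primeWeight a 0 = 0 :=
  le_antisymm (by simpa using primeWeight_le a 0) (primeWeight_nonneg a 0)

lemma primeWeight_mul_log (a : ZMod q) (n : ℕ) :
    primeWeight a n * Real.log n = if n.Prime then n * residueClass a n else 0 := by
  by_cases hn : n.Prime <;> by_cases ha : (n : ZMod q) = a <;>
    simp [primeWeight, hn, ha, ArithmeticFunction.vonMangoldt_apply_prime]

lemma primeSumBelowMod_eq_sumBelow (x : ℝ) (a δ : ℕ) :
    primeSumBelowMod x a δ = sumBelow (primeWeight (a : ZMod δ)) x := by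
  rw [primeSumBelowMod, Finset.sum_filter, sumBelow]
  refine Finset.sum_congr rfl fun p _ ↦ ?_
  simp only [primeWeight, indicator_apply, mem_ofPred_eq, ZMod.natCast_eq_natCast_iff']

lemma sumBelow_mul_residueClass_sub_eq (a : ZMod q) (x : ℝ) :
    sumBelow (fun n ↦ n * residueClass a n) x - sumBelow (fun n ↦ primeWeight a n * Real.log n) x =
      ∑ n ∈ Finset.range ⌈x⌉₊ with ¬n.Prime, n * residueClass a n := by
  rw [sumBelow, sumBelow, ← Finset.sum_sub_distrib, Finset.sum_filter]
  refine Finset.sum_congr rfl fun n _ ↦ ?_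
  rw [primeWeight_mul_log]
  split_ifs <;> simp_all

lemma sum_not_prime_mul_residueClass_le (a : ZMod q) {x : ℝ} (hx : 0 ≤ x) :
    ∑ n ∈ Finset.range ⌈x⌉₊ with ¬n.Prime, n * residueClass a n ≤
      x * (Chebyshev.psi x - Chebyshev.theta x) := by
  have hsubset : {n ∈ Finset.range ⌈x⌉₊ | ¬n.Prime ∧ n ≠ 0} ⊆
      {n ∈ Finset.Ioc 0 ⌊x⌋₊ | ¬n.Prime} := fun n hn ↦ by
    simp only [Finset.mem_filter, Finset.mem_range, Finset.mem_Ioc, Nat.lt_ceil] at hn ⊢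
    exact ⟨⟨Nat.pos_of_ne_zero hn.2.2, Nat.le_floor hn.1.le⟩, hn.2.1⟩
  calc ∑ n ∈ Finset.range ⌈x⌉₊ with ¬n.Prime, n * residueClass a n
      = ∑ n ∈ Finset.range ⌈x⌉₊ with ¬n.Prime ∧ n ≠ 0, n * residueClass a n := by
        rw [← Finset.filter_filter]
        exact (Finset.sum_filter_of_ne fun n _ hn ↦ by rintro rfl; simp at hn).symm
    _ ≤ ∑ n ∈ Finset.Ioc 0 ⌊x⌋₊ with ¬n.Prime, n * residueClass a n :=
        Finset.sum_le_sum_of_subset_of_nonneg hsubset fun n _ _ ↦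
          mul_nonneg n.cast_nonneg (residueClass_nonneg a n)
    _ ≤ ∑ n ∈ Finset.Ioc 0 ⌊x⌋₊ with ¬n.Prime, x * ArithmeticFunction.vonMangoldt n := by
        refine Finset.sum_le_sum fun n hn ↦ ?_
        have hnx : (n : ℝ) ≤ x :=
          (Nat.le_floor_iff hx).1 (Finset.mem_Ioc.1 (Finset.mem_filter.1 hn).1).2
        exact mul_le_mul hnx (residueClass_le a n) (residueClass_nonneg a n) hx
    _ = x * (Chebyshev.psi x - Chebyshev.theta x) := by
        rw [Chebyshev.psi_sub_theta_eq_sum_not_prime, Finset.mul_sum]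

lemma isBigO_sumBelow_mul_residueClass_sub_primeWeight (a : ZMod q) :
    (fun x ↦ sumBelow (fun n ↦ n * residueClass a n) x -
      sumBelow (fun n ↦ primeWeight a n * Real.log n) x) =O[atTop] fun x ↦ x * √x := by
  obtain ⟨C, hC⟩ := Chebyshev.psi_sub_theta_le_mul_sqrt
  refine .of_bound C ?_
  filter_upwards [eventually_ge_atTop 0] with x hx
  have hnonneg : 0 ≤ ∑ n ∈ Finset.range ⌈x⌉₊ with ¬n.Prime, n * residueClass a n :=
    Finset.sum_nonneg fun n _ ↦ mul_nonneg n.cast_nonneg (residueClass_nonneg a n)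
  rw [sumBelow_mul_residueClass_sub_eq, Real.norm_of_nonneg hnonneg,
    Real.norm_of_nonneg (by positivity)]
  refine (sum_not_prime_mul_residueClass_le a hx).trans ?_
  rw [mul_left_comm]
  exact mul_le_mul_of_nonneg_left (hC x) hx

variable [NeZero q] {a : ZMod q}

theorem isBigO_sumBelow_mul_residueClass_sub (ha : IsUnit a) (k : ℕ) :
    (fun x ↦ sumBelow (fun n ↦ n * residueClass a n) x - (q.totient : ℝ)⁻¹ / 2 * x ^ 2)
      =O[atTop] fun x ↦ x ^ 2 / Real.log x ^ k := by
  refine isBigO_sumBelow_natCast_mul_sub (residueClass_nonneg a) (residueClass_apply_zero a)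
    (abscissaOfAbsConv_residueClass_le_one a) (hasSubpolynomialGrowth_LFunctionResidueClassAux a)
    (fun s hs ↦ ?_) k
  rw [eqOn_LFunctionResidueClassAux ha hs]
  push_cast
  ring

theorem isLittleO_sumBelow_primeWeight_mul_log_sub (ha : IsUnit a) :
    (fun x ↦ sumBelow (fun n ↦ primeWeight a n * Real.log n) x - (q.totient : ℝ)⁻¹ / 2 * x ^ 2)
      =o[atTop] fun x ↦ x ^ 2 / Real.log x := by
  have hlog : (fun x : ℝ ↦ x ^ 2 / Real.log x ^ 2) =o[atTop] fun x ↦ x ^ 2 / Real.log x := by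
    have hmul := (Asymptotics.isBigO_refl (fun x : ℝ ↦ x ^ 2 / Real.log x) atTop).mul_isLittleO
      ((Asymptotics.isLittleO_one_iff ℝ).2 Real.tendsto_log_atTop.inv_tendsto_atTop)
    refine hmul.congr (fun x ↦ ?_) fun x ↦ mul_one _
    rw [Pi.inv_apply, ← div_eq_mul_inv, div_div, sq (Real.log x)]
  have hsub := ((isBigO_sumBelow_mul_residueClass_sub ha 2).trans_isLittleO hlog).sub
    ((isBigO_sumBelow_mul_residueClass_sub_primeWeight a).trans_isLittleO
      isLittleO_mul_sqrt_sq_div_log)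
  exact hsub.congr_left fun x ↦ by ring

end

lemma eventually_primeSumBelowMod_bounds {a δ : ℕ} [NeZero δ] (ha : a.Coprime δ) :
    ∀ᶠ x : ℝ in atTop,
      x ^ 2 / (2 * (Nat.totient δ : ℝ) * Real.log x) ≤ primeSumBelowMod x a δ ∧
      primeSumBelowMod x a δ ≤ x ^ 2 / ((Nat.totient δ : ℝ) * Real.log x) := by
  have hunit : IsUnit (a : ZMod δ) := (ZMod.isUnit_iff_coprime a δ).2 ha
  have htotient : 0 < (δ.totient : ℝ)⁻¹ :=
    inv_pos.2 (Nat.cast_pos.2 (Nat.totient_pos.2 (NeZero.pos δ)))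
  have hasymp := isLittleO_sumBelow_primeWeight_mul_log_sub hunit
  filter_upwards [
    eventually_le_sumBelow (primeWeight_nonneg _) htotient hasymp (primeWeight_zero _),
    eventually_sumBelow_le (primeWeight_nonneg _) htotient hasymp (primeWeight_le _)]
    with x hlower hupper
  rw [primeSumBelowMod_eq_sumBelow]
  exact ⟨hlower.trans_eq' (by field_simp), hupper.trans_eq (by field_simp)⟩

end PrimesInProgression

/-- For `δ ≥ 1` there is `x₀` (depending only on `δ`) such that for every `a ≥ 1`
coprime to `δ` and every `x ≥ x₀`,
`x²/(2 φ(δ) log x) ≤ Σ_{p ≡ a (δ), p < x} p ≤ x²/(φ(δ) log x)`. -/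
theorem primeSumBelowMod_bounds (δ : ℕ) (hδ : 1 ≤ δ) :
    ∃ x₀ : ℝ, ∀ a : ℕ, 1 ≤ a → Nat.gcd a δ = 1 → ∀ x : ℝ, x₀ ≤ x →
      x ^ 2 / (2 * (Nat.totient δ : ℝ) * Real.log x) ≤ primeSumBelowMod x a δ ∧
      primeSumBelowMod x a δ ≤ x ^ 2 / ((Nat.totient δ : ℝ) * Real.log x) := by
  have : NeZero δ := ⟨by omega⟩
  have huniform : ∀ᶠ x : ℝ in Filter.atTop, ∀ r : Fin δ, Nat.Coprime r δ →
      x ^ 2 / (2 * (Nat.totient δ : ℝ) * Real.log x) ≤ primeSumBelowMod x r δ ∧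
      primeSumBelowMod x r δ ≤ x ^ 2 / ((Nat.totient δ : ℝ) * Real.log x) :=
    Filter.eventually_all.2 fun r ↦ Filter.eventually_imp_distrib_left.2
      PrimesInProgression.eventually_primeSumBelowMod_bounds
  obtain ⟨x₀, hx₀⟩ := Filter.eventually_atTop.1 huniform
  refine ⟨x₀, fun a _ ha x hx ↦ ?_⟩
  have hmod : primeSumBelowMod x a δ = primeSumBelowMod x (a % δ) δ := by
    simp only [primeSumBelowMod, Nat.mod_mod]
  rw [hmod]
  exact hx₀ x hx ⟨a % δ, Nat.mod_lt a hδ⟩ ((Nat.mod_modEq a δ).gcd_eq.trans ha)
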